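/- Let (ζ_j)_{j≥1} and (γ_m)_{m≥1} be sequences of real numbers with |ζ_1| > |γ_1| > |ζ_2| > |γ_2| > … > 0 and Σ_{j≥1} ζ_j² < ∞. Then there exists a unique real-valued sequence c ∈ h^{1/2} such that the nonzero eigenvalues of the self-adjoint operator Γ_c are exactly the ζ_j, j ≥ 1, each being a simple eigenvalue, and the nonzero eigenvalues of the self-adjoint operator Γ̃_c are exactly the γ_m, m ≥ 1, each being a simple eigenvalue. -/

import Mathlib

open scoped InnerProductSpace ComplexConjugate ENNReal

noncomputable section

/-- The Hilbert space `ℓ²(ℕ, ℂ)`. -/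
abbrev L2 : Type := lp (fun _ : ℕ => ℂ) 2

/-- Membership in the space `h^{1/2}`: `c ∈ ℓ²` and `Σ n |c_n|² < ∞`. -/
def InH12 (c : ℕ → ℂ) : Prop :=
  Memℓp c 2 ∧ Summable (fun n : ℕ => (n : ℝ) * ‖c n‖ ^ 2)

/-- `Γ` is the Hankel operator of symbol `c`: `(Γ x)_n = Σ_p c_{n+p} x_p`. -/
def IsHankelOp (c : ℕ → ℂ) (Γ : L2 →L[ℂ] L2) : Prop :=
  ∀ x : L2, ∀ n : ℕ, (Γ x : ℕ → ℂ) n = ∑' p : ℕ, c (n + p) * (x : ℕ → ℂ) p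

/-- The shifted sequence `c̃ : n ↦ c_{n+1}`. -/
def shiftSeq (c : ℕ → ℂ) : ℕ → ℂ := fun n => c (n + 1)

/-!
If `H` is the Hankel operator of `c` and `H̃` that of the shifted sequence, then
`H² = H̃² + ⟪g, ·⟫ g` with `g = H e₀`. Pairing this identity with eigenvectors `u j` of `H` and
`v m` of `H̃` expresses the numbers `⟪v m, u j⟫` through `⟪v m, g⟫` and `⟪u j, g⟫`, and the
partial fraction identities `∑ⱼ |⟪u j, g⟫|² / (ζ j² - γ m²) = 1`, together with the trace
`∑ⱼ |⟪u j, g⟫|² = ∑ⱼ (ζ j² - γ j²)`, force `|⟪u j, g⟫|²` to be the residue at `ζ j²` of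
`∏ (x - γ i²) / (x - ζ i²)`. As `H eₙ₊₁ = H̃ eₙ`, every coefficient `c n = ⟪H eₙ, e₀⟫` is then a
function of `ζ` and `γ`.

Conversely, these residues determine a diagonal operator `D` and a vector `q` such that
`D² - ⟪D q, ·⟫ D q` is the square of an operator `D̃` with eigenvalues `γ`. Then `D̃ = T D` for
some `T` with `1 - T* T = ⟪q, ·⟫ q`, and `x ↦ (⟪q, Tⁿ x⟫)ₙ` is an isometry into `ℓ²` as soon as
`Tⁿ → 0` strongly. It intertwines `T` with the backward shift, so it carries `D` to the Hankel
operator of `c n = ⟪q, Tⁿ D q⟫`. The convergence `Tⁿ → 0` rests on `∑ ‖Tⁿ D q‖² < ∞`, a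
telescoping of Hilbert–Schmidt norms, and on the simplicity of the spectrum.
-/

section PartialFractions

variable {ι F : Type*} [Field F] {s : Finset ι} {p r : ι → F}

open Lagrange Polynomial

theorem degree_nodal_sub_nodal_lt (s : Finset ι) (p r : ι → F) :
    (nodal s r - nodal s p).degree < s.card := by
  have hdeg : (nodal s r).degree = s.card := degree_nodal
  refine hdeg ▸ degree_sub_lt_left (hdeg.trans degree_nodal.symm) nodal_ne_zero ?_
  rw [nodal_monic.leadingCoeff, nodal_monic.leadingCoeff]

theorem eval_nodal_sub_nodal_at_node (r : ι → F) {i : ι} (hi : i ∈ s) :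
    (nodal s r - nodal s p).eval (p i) = ∏ k ∈ s, (p i - r k) := by
  rw [eval_sub, eval_nodal_at_node hi, sub_zero, eval_nodal]

variable [DecidableEq ι]

theorem sum_nodalWeight_mul_eval_div_sub {P : F[X]} (hp : Set.InjOn p s) (hP : P.degree < s.card)
    {x : F} (hx : ∀ i ∈ s, x ≠ p i) :
    ∑ i ∈ s, nodalWeight s p i * P.eval (p i) / (x - p i) = P.eval x / ∏ i ∈ s, (x - p i) := by
  have hprod : ∏ i ∈ s, (x - p i) ≠ 0 :=
    Finset.prod_ne_zero_iff.2 fun i hi => sub_ne_zero.2 (hx i hi)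
  have hinterp := eval_interpolate_not_at_node (fun i => P.eval (p i)) hx
  rw [← eq_interpolate hp hP, eval_nodal] at hinterp
  rw [eq_div_iff hprod, hinterp, mul_comm]
  congr 1
  exact Finset.sum_congr rfl fun i _ => by ring

/-- The residue at the simple pole `p j` of the rational function
`∏ i ∈ s, (x - r i) / ∏ i ∈ s, (x - p i)`. -/
def residueAt (s : Finset ι) (p r : ι → F) (j : ι) : F :=
  (∏ i ∈ s, (p j - r i)) / ∏ i ∈ s.erase j, (p j - p i)

theorem residueAt_eq_mul_prod {j : ι} (hj : j ∈ s) :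
    residueAt s p r j = (p j - r j) * ∏ i ∈ s.erase j, (p j - r i) / (p j - p i) := by
  rw [residueAt, ← Finset.mul_prod_erase _ _ hj, Finset.prod_div_distrib, mul_div_assoc]

theorem one_add_sum_residueAt_div_sub (hp : Set.InjOn p s) {x : F} (hx : ∀ i ∈ s, x ≠ p i) :
    1 + ∑ j ∈ s, residueAt s p r j / (x - p j) = (∏ i ∈ s, (x - r i)) / ∏ i ∈ s, (x - p i) := by
  have hprod : ∏ i ∈ s, (x - p i) ≠ 0 :=
    Finset.prod_ne_zero_iff.2 fun i hi => sub_ne_zero.2 (hx i hi)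
  have hsum := sum_nodalWeight_mul_eval_div_sub hp (degree_nodal_sub_nodal_lt s p r) hx
  have hterm : ∀ i ∈ s, nodalWeight s p i * (nodal s r - nodal s p).eval (p i) / (x - p i) =
      residueAt s p r i / (x - p i) := fun i hi => by
    rw [eval_nodal_sub_nodal_at_node r hi, nodalWeight, Finset.prod_inv_distrib, mul_comm,
      residueAt, ← div_eq_mul_inv]
  rw [Finset.sum_congr rfl hterm, eval_sub, eval_nodal, eval_nodal, sub_div, div_self hprod] at hsum
  rw [hsum, add_sub_cancel]

theorem sum_residueAt (hp : Set.InjOn p s) :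
    ∑ j ∈ s, residueAt s p r j = ∑ j ∈ s, (p j - r j) := by
  rcases s.eq_empty_or_nonempty with rfl | hs
  · rfl
  have hcoeff := coeff_eq_sum hp (degree_nodal_sub_nodal_lt s p r)
  rw [coeff_sub, nodal, nodal, prod_X_sub_C_coeff_card_pred _ _ hs.card_pos,
    prod_X_sub_C_coeff_card_pred _ _ hs.card_pos, ← nodal, ← nodal, neg_sub_neg,
    ← Finset.sum_sub_distrib] at hcoeff
  rw [hcoeff]
  exact Finset.sum_congr rfl fun i hi => by rw [eval_nodal_sub_nodal_at_node r hi, residueAt]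

omit [DecidableEq ι] in
theorem hasSum_mul_eval_div_prod {κ : Type*} [TopologicalSpace F] [IsTopologicalRing F]
    {b q : κ → F} {P : F[X]} (hr : Set.InjOn r s) (hP : P.Monic) (hdeg : P.degree + 1 = s.card)
    (hq : ∀ j, ∀ i ∈ s, q j ≠ r i) (hb : ∀ i ∈ s, HasSum (fun j => b j / (q j - r i)) 1) :
    HasSum (fun j => b j * (P.eval (q j) / ∏ i ∈ s, (q j - r i))) 1 := by
  classical
  set w : ι → F := fun i => nodalWeight s r i * P.eval (r i)
  have hlt : P.degree < s.card := by
    rw [← hdeg, degree_eq_natDegree hP.ne_zero]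
    exact_mod_cast Nat.lt_succ_self _
  have hw : ∑ i ∈ s, w i = 1 := by
    rw [← hP.leadingCoeff, leadingCoeff_eq_sum hr hdeg.symm]
    refine Finset.sum_congr rfl fun i _ => ?_
    rw [div_eq_mul_inv, ← Finset.prod_inv_distrib, mul_comm, ← nodalWeight]
  have hsum : HasSum (fun j => ∑ i ∈ s, w i * (b j / (q j - r i))) 1 := by
    simpa only [mul_one, hw] using hasSum_sum fun i hi => (hb i hi).mul_left (w i)
  refine hsum.congr_fun fun j => ?_
  rw [← sum_nodalWeight_mul_eval_div_sub hr hlt (hq j), Finset.mul_sum]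
  exact Finset.sum_congr rfl fun i _ => by ring

end PartialFractions

open Filter Topology

/-- Two strictly interlacing sequences `p 0 > r 0 > p 1 > r 1 > ⋯ > 0` with `∑ p j < ∞`: the poles
`p` and the roots `r` of the function `∏ (x - r i) / (x - p i)`. -/
structure Interlacing (p r : ℕ → ℝ) : Prop where
  root_lt_pole : ∀ j, r j < p j
  pole_succ_lt_root : ∀ j, p (j + 1) < r j
  root_pos : ∀ j, 0 < r j
  summable_pole : Summable p

namespace Interlacing

/-- The residue at `p j` of the infinite product `∏ (x - r i) / (x - p i)`. The residues of the
finite products increase, so the limit is encoded as a supremum over the finite products which have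
`p j` as a pole. -/
def weight (p r : ℕ → ℝ) (j : ℕ) : ℝ :=
  ⨆ N, residueAt (Finset.range (j + 1 + N)) p r j

variable {p r : ℕ → ℝ} (h : Interlacing p r)
include h

theorem strictAnti_pole : StrictAnti p :=
  strictAnti_nat_of_succ_lt fun n => (h.pole_succ_lt_root n).trans (h.root_lt_pole n)

theorem strictAnti_root : StrictAnti r :=
  strictAnti_nat_of_succ_lt fun n => (h.root_lt_pole (n + 1)).trans (h.pole_succ_lt_root n)

theorem pole_pos (j : ℕ) : 0 < p j := (h.root_pos j).trans (h.root_lt_pole j)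

theorem pole_lt_root {i j : ℕ} (hij : i < j) : p j < r i :=
  (h.strictAnti_pole.antitone (Nat.succ_le_of_lt hij)).trans_lt (h.pole_succ_lt_root i)

theorem root_lt_pole_of_le {i j : ℕ} (hij : i ≤ j) : r j < p i :=
  (h.root_lt_pole j).trans_le (h.strictAnti_pole.antitone hij)

theorem pole_ne_root (i j : ℕ) : p i ≠ r j := by
  rcases le_or_gt i j with hij | hij
  · exact (h.root_lt_pole_of_le hij).ne'
  · exact (h.pole_lt_root hij).ne

theorem summable_root : Summable r :=
  h.summable_pole.of_nonneg_of_le (fun j => (h.root_pos j).le) fun j => (h.root_lt_pole j).le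

theorem summable_pole_sub_root : Summable fun j => p j - r j := h.summable_pole.sub h.summable_root

theorem exists_pos_le_abs_pole_sub_root (m : ℕ) : ∃ δ > 0, ∀ j, δ ≤ |p j - r m| := by
  refine ⟨min (p m - r m) (r m - p (m + 1)),
    lt_min (sub_pos.2 (h.root_lt_pole m)) (sub_pos.2 (h.pole_succ_lt_root m)), fun j => ?_⟩
  rcases le_or_gt j m with hj | hj
  · refine (min_le_left _ _).trans (le_trans ?_ (le_abs_self _))
    linarith [h.strictAnti_pole.antitone hj]
  · refine (min_le_right _ _).trans (le_trans ?_ (neg_le_abs _))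
    linarith [h.strictAnti_pole.antitone (Nat.succ_le_of_lt hj)]

theorem residueAt_range_pos {N j : ℕ} (hj : j < N) : 0 < residueAt (Finset.range N) p r j := by
  rw [residueAt_eq_mul_prod (Finset.mem_range.2 hj)]
  refine mul_pos (sub_pos.2 (h.root_lt_pole j)) (Finset.prod_pos fun i hi => ?_)
  rcases lt_or_gt_of_ne (Finset.ne_of_mem_erase hi) with hij | hij
  · exact div_pos_of_neg_of_neg (sub_neg.2 (h.pole_lt_root hij)) (sub_neg.2 (h.strictAnti_pole hij))
  · exact div_pos (sub_pos.2 (h.root_lt_pole_of_le hij.le)) (sub_pos.2 (h.strictAnti_pole hij))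

theorem residueAt_range_le_succ {N j : ℕ} (hj : j < N) :
    residueAt (Finset.range N) p r j ≤ residueAt (Finset.range (N + 1)) p r j := by
  have hsucc : residueAt (Finset.range (N + 1)) p r j =
      residueAt (Finset.range N) p r j * ((p j - r N) / (p j - p N)) := by
    rw [residueAt, Finset.prod_range_succ, Finset.range_add_one, Finset.erase_insert_of_ne hj.ne',
      Finset.prod_insert (by simp), mul_comm (p j - p N), mul_div_mul_comm, ← residueAt]
  rw [hsucc]
  refine le_mul_of_one_le_right (h.residueAt_range_pos hj).le ?_
  rw [one_le_div (sub_pos.2 (h.strictAnti_pole hj))]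
  linarith [h.root_lt_pole N]

theorem residueAt_range_mono {j N M : ℕ} (hj : j < N) (hNM : N ≤ M) :
    residueAt (Finset.range N) p r j ≤ residueAt (Finset.range M) p r j := by
  induction M, hNM using Nat.le_induction with
  | base => exact le_rfl
  | succ M hM ih => exact ih.trans (h.residueAt_range_le_succ (hj.trans_le hM))

theorem sum_residueAt_range_le {N M : ℕ} (hM : M ≤ N) :
    ∑ j ∈ Finset.range M, residueAt (Finset.range N) p r j ≤ ∑' j, (p j - r j) :=
  calc ∑ j ∈ Finset.range M, residueAt (Finset.range N) p r j
      ≤ ∑ j ∈ Finset.range N, residueAt (Finset.range N) p r j :=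
        Finset.sum_le_sum_of_subset_of_nonneg (Finset.range_mono hM)
          fun _ hi _ => (h.residueAt_range_pos (Finset.mem_range.1 hi)).le
    _ = ∑ j ∈ Finset.range N, (p j - r j) := sum_residueAt h.strictAnti_pole.injective.injOn
    _ ≤ ∑' j, (p j - r j) :=
        h.summable_pole_sub_root.sum_le_tsum _ fun i _ => (sub_pos.2 (h.root_lt_pole i)).le

theorem bddAbove_residueAt_range (j : ℕ) :
    BddAbove (Set.range fun N => residueAt (Finset.range (j + 1 + N)) p r j) := by
  refine ⟨∑' j, (p j - r j), ?_⟩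
  rintro _ ⟨N, rfl⟩
  exact (Finset.single_le_sum (f := residueAt (Finset.range (j + 1 + N)) p r)
    (fun _ hi => (h.residueAt_range_pos (Finset.mem_range.1 hi)).le)
    (Finset.mem_range.2 (by omega))).trans (h.sum_residueAt_range_le le_rfl)

theorem residueAt_range_le_weight {j N : ℕ} (hj : j < N) :
    residueAt (Finset.range N) p r j ≤ weight p r j := by
  obtain ⟨M, rfl⟩ := Nat.exists_eq_add_of_le (Nat.succ_le_of_lt hj)
  exact le_ciSup (h.bddAbove_residueAt_range j) M

theorem weight_pos (j : ℕ) : 0 < weight p r j :=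
  (h.residueAt_range_pos j.lt_succ_self).trans_le (h.residueAt_range_le_weight j.lt_succ_self)

theorem tendsto_residueAt_range (j : ℕ) :
    Tendsto (fun N => residueAt (Finset.range N) p r j) atTop (𝓝 (weight p r j)) := by
  have hmono : Monotone fun N => residueAt (Finset.range (j + 1 + N)) p r j :=
    fun N M hNM => h.residueAt_range_mono (by omega) (by omega)
  rw [← tendsto_add_atTop_iff_nat (j + 1)]
  simpa only [weight, add_comm _ (j + 1)] using
    tendsto_atTop_ciSup hmono (h.bddAbove_residueAt_range j)

theorem hasSum_weight : HasSum (weight p r) (∑' j, (p j - r j)) := by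
  have hle : ∀ M, ∑ j ∈ Finset.range M, weight p r j ≤ ∑' j, (p j - r j) := fun M => by
    refine le_of_tendsto
      (tendsto_finsetSum (Finset.range M) fun j _ => h.tendsto_residueAt_range j) ?_
    filter_upwards [eventually_ge_atTop M] with N hN using h.sum_residueAt_range_le hN
  have hs : Summable (weight p r) := summable_of_sum_range_le (fun j => (h.weight_pos j).le) hle
  have hge : ∑' j, (p j - r j) ≤ ∑' j, weight p r j :=
    h.summable_pole_sub_root.tsum_le_of_sum_range_le fun N =>
      calc ∑ j ∈ Finset.range N, (p j - r j)
          = ∑ j ∈ Finset.range N, residueAt (Finset.range N) p r j :=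
            (sum_residueAt h.strictAnti_pole.injective.injOn).symm
        _ ≤ ∑ j ∈ Finset.range N, weight p r j :=
            Finset.sum_le_sum fun _ hi => h.residueAt_range_le_weight (Finset.mem_range.1 hi)
        _ ≤ ∑' j, weight p r j := hs.sum_le_tsum _ fun i _ => (h.weight_pos i).le
  exact le_antisymm (hs.tsum_le_of_sum_range_le hle) hge ▸ hs.hasSum

theorem sum_residueAt_range_div_le_one {N M : ℕ} (hM : M ≤ N) :
    ∑ j ∈ Finset.range M, residueAt (Finset.range N) p r j / p j ≤ 1 := by
  have hzero := one_add_sum_residueAt_div_sub (s := Finset.range N) (r := r) (x := 0)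
    h.strictAnti_pole.injective.injOn fun i _ => (h.pole_pos i).ne
  have hprod : 0 ≤ (∏ i ∈ Finset.range N, (0 - r i)) / ∏ i ∈ Finset.range N, (0 - p i) := by
    rw [← Finset.prod_div_distrib]
    exact Finset.prod_nonneg fun i _ =>
      div_nonneg_of_nonpos (by linarith [h.root_pos i]) (by linarith [h.pole_pos i])
  rw [← hzero] at hprod
  simp only [zero_sub, div_neg, Finset.sum_neg_distrib] at hprod
  calc ∑ j ∈ Finset.range M, residueAt (Finset.range N) p r j / p j
      ≤ ∑ j ∈ Finset.range N, residueAt (Finset.range N) p r j / p j :=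
        Finset.sum_le_sum_of_subset_of_nonneg (Finset.range_mono hM) fun i hi _ =>
          (div_pos (h.residueAt_range_pos (Finset.mem_range.1 hi)) (h.pole_pos i)).le
    _ ≤ 1 := by linarith

theorem sum_weight_div_pole_le_one (M : ℕ) : ∑ j ∈ Finset.range M, weight p r j / p j ≤ 1 := by
  refine le_of_tendsto (tendsto_finsetSum (Finset.range M) fun j _ =>
    (h.tendsto_residueAt_range j).div_const (p j)) ?_
  filter_upwards [eventually_ge_atTop M] with N hN using h.sum_residueAt_range_div_le_one hN

theorem summable_weight_div_pole : Summable fun j => weight p r j / p j :=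
  summable_of_sum_range_le (fun j => (div_pos (h.weight_pos j) (h.pole_pos j)).le)
    h.sum_weight_div_pole_le_one

theorem tsum_weight_div_pole_le_one : ∑' j, weight p r j / p j ≤ 1 :=
  h.summable_weight_div_pole.tsum_le_of_sum_range_le h.sum_weight_div_pole_le_one

theorem sum_residueAt_range_div_sub_root {N m : ℕ} (hm : m < N) :
    ∑ j ∈ Finset.range N, residueAt (Finset.range N) p r j / (p j - r m) = 1 := by
  have hroot := one_add_sum_residueAt_div_sub (s := Finset.range N) (r := r) (x := r m)
    h.strictAnti_pole.injective.injOn fun i _ => (h.pole_ne_root i m).symm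
  rw [Finset.prod_eq_zero (Finset.mem_range.2 hm) (sub_self (r m)), zero_div] at hroot
  simp only [← neg_sub (p _) (r m), div_neg, Finset.sum_neg_distrib] at hroot
  linarith

theorem hasSum_weight_div_sub_root (m : ℕ) :
    HasSum (fun j => weight p r j / (p j - r m)) 1 := by
  obtain ⟨δ, hδ, hgap⟩ := h.exists_pos_le_abs_pole_sub_root m
  have hbound : Summable fun j => weight p r j / δ := h.hasSum_weight.summable.div_const δ
  have hterm : ∀ j x, 0 ≤ x → x ≤ weight p r j → ‖x / (p j - r m)‖ ≤ weight p r j / δ := by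
    intro j x hx hxw
    rw [norm_div, Real.norm_eq_abs, Real.norm_eq_abs, abs_of_nonneg hx]
    exact div_le_div₀ (h.weight_pos j).le hxw hδ (hgap j)
  have hlim := tendsto_tsum_of_dominated_convergence (𝓕 := atTop)
    (f := fun N j => (Set.Iio N).indicator
      (fun j => residueAt (Finset.range N) p r j / (p j - r m)) j)
    (g := fun j => weight p r j / (p j - r m)) hbound
    (fun j => ((h.tendsto_residueAt_range j).div_const _).congr' <| by
      filter_upwards [eventually_gt_atTop j] with N hN
      rw [Set.indicator_of_mem (Set.mem_Iio.2 hN)])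
    (Eventually.of_forall fun N j => by
      by_cases hj : j < N
      · rw [Set.indicator_of_mem (Set.mem_Iio.2 hj)]
        exact hterm j _ (h.residueAt_range_pos hj).le (h.residueAt_range_le_weight hj)
      · rw [Set.indicator_of_notMem (by simpa using hj), norm_zero]
        exact (div_pos (h.weight_pos j) hδ).le)
  have hone : ∀ᶠ N in atTop, ∑' j, (Set.Iio N).indicator
      (fun j => residueAt (Finset.range N) p r j / (p j - r m)) j = 1 := by
    filter_upwards [eventually_gt_atTop m] with N hN
    rw [← Finset.coe_range, ← sum_eq_tsum_indicator, h.sum_residueAt_range_div_sub_root hN]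
  have hsum : Summable fun j => weight p r j / (p j - r m) :=
    hbound.of_norm_bounded fun j => hterm j _ (h.weight_pos j).le le_rfl
  rw [← tendsto_nhds_unique hlim (tendsto_const_nhds.congr' (hone.mono fun _ => Eq.symm))]
  exact hsum.hasSum

theorem prod_erase_pole_div_prod_root_nonpos {N k j : ℕ} (hk : k < N) (hj : N ≤ j) :
    (∏ i ∈ (Finset.range N).erase k, (p j - p i)) / ∏ i ∈ Finset.range N, (p j - r i) ≤ 0 := by
  rw [← Finset.mul_prod_erase _ _ (Finset.mem_range.2 hk), div_mul_eq_div_div_swap,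
    ← Finset.prod_div_distrib]
  refine div_nonpos_of_nonneg_of_nonpos (Finset.prod_nonneg fun i hi => ?_)
    (by linarith [h.pole_lt_root (hk.trans_le hj)])
  have hij : i < j := (Finset.mem_range.1 (Finset.mem_of_mem_erase hi)).trans_le hj
  exact div_nonneg_of_nonpos (by linarith [h.strictAnti_pole hij])
    (by linarith [h.pole_lt_root hij])

theorem residueAt_range_le_of_hasSum {b : ℕ → ℝ} (hb : ∀ j, 0 ≤ b j)
    (hsum : ∀ m, HasSum (fun j => b j / (p j - r m)) 1) {N k : ℕ} (hk : k < N) :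
    residueAt (Finset.range N) p r k ≤ b k := by
  set s := Finset.range N
  have hks : k ∈ s := Finset.mem_range.2 hk
  have hdeg : (Lagrange.nodal (s.erase k) p).degree + 1 = s.card := by
    rw [Lagrange.degree_nodal, ← Finset.card_erase_add_one hks, Nat.cast_succ]
  -- The polynomial vanishing at the other poles isolates the `k`-th term, up to negative terms.
  have hisolate := hasSum_mul_eval_div_prod h.strictAnti_root.injective.injOn
    Lagrange.nodal_monic hdeg (fun j i _ => h.pole_ne_root j i) fun m _ => hsum m
  have hle : ∀ j, b j * ((Lagrange.nodal (s.erase k) p).eval (p j) / ∏ i ∈ s, (p j - r i)) ≤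
      if j = k then b k / residueAt s p r k else 0 := fun j => by
    split_ifs with hjk
    · rw [hjk, Lagrange.eval_nodal, residueAt, div_div_eq_mul_div, mul_div_assoc]
    · rcases lt_or_ge j N with hj | hj
      · rw [Lagrange.eval_nodal_at_node (Finset.mem_erase.2 ⟨hjk, Finset.mem_range.2 hj⟩),
          zero_div, mul_zero]
      · rw [Lagrange.eval_nodal]
        exact mul_nonpos_of_nonneg_of_nonpos (hb j) (h.prod_erase_pole_div_prod_root_nonpos hk hj)
  have hone := hasSum_le hle hisolate (hasSum_ite_eq k (b k / residueAt s p r k))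
  rwa [one_le_div (h.residueAt_range_pos hk)] at hone

theorem eq_weight {b : ℕ → ℝ} (hb : ∀ j, 0 ≤ b j)
    (hsum : ∀ m, HasSum (fun j => b j / (p j - r m)) 1) (htrace : HasSum b (∑' j, (p j - r j))) :
    b = weight p r := by
  have hle : ∀ k, weight p r k ≤ b k := fun k => by
    refine le_of_tendsto (h.tendsto_residueAt_range k) ?_
    filter_upwards [eventually_gt_atTop k] with N hN using h.residueAt_range_le_of_hasSum hb hsum hN
  have hdiff : HasSum (fun k => b k - weight p r k) 0 := by
    simpa only [sub_self] using htrace.sub h.hasSum_weight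
  have hzero := (hasSum_zero_iff_of_nonneg fun k => sub_nonneg.2 (hle k)).1 hdiff
  exact funext fun k => sub_eq_zero.1 (congrFun hzero k)

end Interlacing

namespace Interlacing

variable {ζ γ : ℕ → ℝ} (h : Interlacing (ζ ^ 2) (γ ^ 2))
include h

theorem left_injective : Function.Injective ζ :=
  h.strictAnti_pole.injective.of_comp (f := (· ^ 2))

theorem right_injective : Function.Injective γ :=
  h.strictAnti_root.injective.of_comp (f := (· ^ 2))

theorem left_ne_zero (j : ℕ) : ζ j ≠ 0 := pow_ne_zero_iff two_ne_zero |>.1 (h.pole_pos j).ne'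

theorem right_ne_zero (j : ℕ) : γ j ≠ 0 := pow_ne_zero_iff two_ne_zero |>.1 (h.root_pos j).ne'

end Interlacing

section Orthonormal

variable {𝕜 E F ι : Type*} [RCLike 𝕜] [NormedAddCommGroup E] [InnerProductSpace 𝕜 E]
  [NormedAddCommGroup F] [NormedSpace 𝕜 F]

theorem hasSum_inner_right {f : ι → E} {y : E} (hf : HasSum f y) (x : E) :
    HasSum (fun j => ⟪x, f j⟫_𝕜) ⟪x, y⟫_𝕜 :=
  hf.mapL (innerSL 𝕜 x)

section

variable {u : ι → E} (hu : Orthonormal 𝕜 u) {a : ι → 𝕜} {y : E}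
include hu

theorem inner_eq_of_hasSum_smul (hy : HasSum (fun j => a j • u j) y) (j : ι) :
    ⟪u j, y⟫_𝕜 = a j := by
  classical
  refine (hasSum_inner_right hy (u j)).unique ((hasSum_ite_eq j (a j)).congr_fun fun i => ?_)
  rw [inner_smul_right, orthonormal_iff_ite.1 hu, mul_ite, mul_one, mul_zero]
  simp only [eq_comm (a := j)]
  split_ifs with hij <;> simp [hij]

theorem hasSum_norm_sq_of_hasSum_smul (hy : HasSum (fun j => a j • u j) y) :
    HasSum (fun j => ‖a j‖ ^ 2) (‖y‖ ^ 2) := by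
  have hinner : HasSum (fun j => ((‖a j‖ ^ 2 : ℝ) : 𝕜)) ((‖y‖ ^ 2 : ℝ) : 𝕜) := by
    rw [RCLike.ofReal_pow, ← inner_self_eq_norm_sq_to_K]
    refine (hasSum_inner_right hy y).congr_fun fun j => ?_
    rw [inner_smul_right, ← inner_conj_symm y, inner_eq_of_hasSum_smul hu hy, RCLike.mul_conj,
      RCLike.ofReal_pow]
  exact_mod_cast hinner

theorem summable_smul_of_summable_norm_sq [CompleteSpace E] (ha : Summable fun j => ‖a j‖ ^ 2) :
    Summable fun j => a j • u j := by
  simpa using (hu.orthogonalFamily.summable_iff_norm_sq_summable a).2 ha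

theorem hasSum_inner_smul_of_forall_orthogonal [CompleteSpace E]
    (hy : ∀ x, (∀ j, ⟪u j, x⟫_𝕜 = 0) → ⟪x, y⟫_𝕜 = 0) :
    HasSum (fun j => ⟪u j, y⟫_𝕜 • u j) y := by
  obtain ⟨z, hz⟩ := summable_smul_of_summable_norm_sq hu (hu.inner_products_summable (x := y))
  have hperp : ∀ j, ⟪u j, y - z⟫_𝕜 = 0 := fun j => by
    rw [inner_sub_right, inner_eq_of_hasSum_smul hu hz, sub_self]
  have hz_perp : ⟪y - z, z⟫_𝕜 = 0 := by
    refine (hasSum_inner_right hz (y - z)).unique (hasSum_zero.congr_fun fun j => ?_)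
    rw [inner_smul_right, ← inner_conj_symm (y - z), hperp, map_zero, mul_zero]
  have hzero : ⟪y - z, y - z⟫_𝕜 = 0 := by rw [inner_sub_right, hy _ hperp, hz_perp, sub_zero]
  rwa [← sub_eq_zero.1 (inner_self_eq_zero.1 hzero)] at hz

end

theorem eq_of_forall_inner_eq (e : HilbertBasis ι 𝕜 E) {x y : E}
    (h : ∀ j, ⟪e j, x⟫_𝕜 = ⟪e j, y⟫_𝕜) : x = y :=
  e.repr.injective <| lp.ext <| funext fun j => by
    rw [e.repr_apply_apply, e.repr_apply_apply, h]

theorem hasSum_norm_inner_sq (e : HilbertBasis ι 𝕜 E) (x : E) :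
    HasSum (fun n => ‖⟪e n, x⟫_𝕜‖ ^ 2) (‖x‖ ^ 2) := by
  simpa only [e.repr_apply_apply] using
    hasSum_norm_sq_of_hasSum_smul e.orthonormal (e.hasSum_repr x)

theorem norm_apply_sq_le_tsum_mul (e : HilbertBasis ι 𝕜 E) {T : E →L[𝕜] F}
    (hT : Summable fun n => ‖T (e n)‖ ^ 2) (x : E) :
    ‖T x‖ ^ 2 ≤ (∑' n, ‖T (e n)‖ ^ 2) * ‖x‖ ^ 2 := by
  have hTx : HasSum (fun n => ⟪e n, x⟫_𝕜 • T (e n)) (T x) := by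
    simpa only [e.repr_apply_apply, map_smul] using (e.hasSum_repr x).mapL T
  refine le_of_tendsto ((hTx : Tendsto _ _ _).norm.pow 2) (Eventually.of_forall fun s => ?_)
  calc ‖∑ n ∈ s, ⟪e n, x⟫_𝕜 • T (e n)‖ ^ 2
      ≤ (∑ n ∈ s, ‖T (e n)‖ * ‖⟪e n, x⟫_𝕜‖) ^ 2 := by
        gcongr
        exact norm_sum_le_of_le s fun n _ => by rw [norm_smul, mul_comm]
    _ ≤ (∑ n ∈ s, ‖T (e n)‖ ^ 2) * ∑ n ∈ s, ‖⟪e n, x⟫_𝕜‖ ^ 2 := Finset.sum_mul_sq_le_sq_mul_sq ..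
    _ ≤ (∑' n, ‖T (e n)‖ ^ 2) * ‖x‖ ^ 2 := by
        gcongr
        · exact hT.sum_le_tsum s fun n _ => sq_nonneg _
        · exact e.orthonormal.sum_inner_products_le x

theorem isCompactOperator_of_summable_norm_sq [CompleteSpace F] (e : HilbertBasis ι 𝕜 E)
    {T : E →L[𝕜] F} (hT : Summable fun n => ‖T (e n)‖ ^ 2) : IsCompactOperator T := by
  classical
  let T' : Finset ι → E →L[𝕜] F := fun s => ∑ n ∈ s, (innerSL 𝕜 (e n)).smulRight (T (e n))
  have hcompact : ∀ s, IsCompactOperator (T' s) := fun s =>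
    (compactOperator (RingHom.id 𝕜) E F).sum_mem fun n _ =>
      (isCompactOperator_of_locallyCompactSpace_dom (innerSL 𝕜 (e n))).continuous_comp
        (g := fun z => z • T (e n)) (by fun_prop)
  have hsub : ∀ s n, ‖(T - T' s) (e n)‖ ^ 2 = {n | n ∉ s}.indicator (fun n => ‖T (e n)‖ ^ 2) n := by
    intro s n
    have hT'n : T' s (e n) = if n ∈ s then T (e n) else 0 := by
      simp [T', orthonormal_iff_ite.1 e.orthonormal]
    by_cases hn : n ∈ s <;> simp [hT'n, hn]
  have htail := (tendsto_tsum_compl_atTop_zero fun n => ‖T (e n)‖ ^ 2).sqrt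
  rw [Real.sqrt_zero] at htail
  refine isCompactOperator_of_tendsto (l := atTop) (F := T') ?_ (Eventually.of_forall hcompact)
  rw [tendsto_iff_norm_sub_tendsto_zero]
  refine squeeze_zero (fun _ => norm_nonneg _) (fun s => ?_) htail
  have hsum : Summable fun n => ‖(T - T' s) (e n)‖ ^ 2 := by
    simp only [hsub]
    exact hT.indicator _
  rw [norm_sub_rev]
  refine ContinuousLinearMap.opNorm_le_bound _ (Real.sqrt_nonneg _) fun x =>
    le_of_sq_le_sq ((norm_apply_sq_le_tsum_mul e hsum x).trans_eq ?_) (by positivity)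
  rw [mul_pow, Real.sq_sqrt (tsum_nonneg fun n => sq_nonneg _), tsum_congr (hsub s),
    ← tsum_subtype]
  rfl

end Orthonormal

section Diagonal

variable {E : Type*} [NormedAddCommGroup E] [InnerProductSpace ℂ E]

/-- `T` is the diagonal operator with eigenvalues `ζ` along the orthonormal family `u`; it vanishes
on the orthogonal complement of the family. -/
structure IsDiagonalAlong {ι : Type*} (T : E →L[ℂ] E) (ζ : ι → ℝ) (u : ι → E) : Prop where
  orthonormal : Orthonormal ℂ u
  hasSum_apply : ∀ x, HasSum (fun j => ((ζ j : ℂ) * ⟪u j, x⟫_ℂ) • u j) (T x)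

/-- The nonzero eigenvalues of `T` are exactly the `ζ j`, and they are simple. -/
structure HasSimpleSpectrum {ι : Type*} (T : E →L[ℂ] E) (ζ : ι → ℝ) : Prop where
  eigenvalues_eq : {z : ℂ | z ≠ 0 ∧ Module.End.HasEigenvalue T.toLinearMap z} =
    Set.range fun j => (ζ j : ℂ)
  finrank_eigenspace : ∀ j, Module.finrank ℂ (Module.End.eigenspace T.toLinearMap (ζ j : ℂ)) = 1

variable {ι : Type*} {T : E →L[ℂ] E} {ζ : ι → ℝ} {u : ι → E}

namespace IsDiagonalAlong

variable (h : IsDiagonalAlong T ζ u)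
include h

theorem inner_apply (j : ι) (x : E) : ⟪u j, T x⟫_ℂ = ζ j * ⟪u j, x⟫_ℂ :=
  inner_eq_of_hasSum_smul h.orthonormal (h.hasSum_apply x) j

theorem hasSum_norm_sq (x : E) :
    HasSum (fun j => ζ j ^ 2 * ‖⟪u j, x⟫_ℂ‖ ^ 2) (‖T x‖ ^ 2) := by
  simpa only [norm_mul, mul_pow, Complex.norm_real, Real.norm_eq_abs, sq_abs] using
    hasSum_norm_sq_of_hasSum_smul h.orthonormal (h.hasSum_apply x)

theorem apply_vec (j : ι) : T (u j) = (ζ j : ℂ) • u j := by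
  classical
  refine (h.hasSum_apply (u j)).unique ((hasSum_ite_eq j ((ζ j : ℂ) • u j)).congr_fun fun i => ?_)
  rw [orthonormal_iff_ite.1 h.orthonormal]
  split_ifs with hij <;> simp [hij]

theorem isSymmetric : T.IsSymmetric := fun x y => by
  have hx := (hasSum_inner_right (𝕜 := ℂ) (h.hasSum_apply x) y).map (starRingEnd ℂ)
    Complex.continuous_conj
  rw [inner_conj_symm] at hx
  refine hx.unique ((hasSum_inner_right (h.hasSum_apply y) x).congr_fun fun j => ?_)
  simp only [Function.comp, inner_smul_right, map_mul, inner_conj_symm, Complex.conj_ofReal]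
  ring

theorem apply_eq_zero {x : E} (hx : ∀ j, ⟪u j, x⟫_ℂ = 0) : T x = 0 :=
  (h.hasSum_apply x).unique <| hasSum_zero.congr_fun fun j => by rw [hx, mul_zero, zero_smul]

theorem sub_mul_inner_eq_zero {z : ℂ} {y : E} (hy : T y = z • y) (j : ι) :
    (z - ζ j) * ⟪u j, y⟫_ℂ = 0 := by
  have hinner := h.inner_apply j y
  rw [hy, inner_smul_right] at hinner
  linear_combination hinner

theorem exists_eq_of_apply_eq_smul {z : ℂ} (hz : z ≠ 0) {y : E} (hy : T y = z • y)
    (hy0 : y ≠ 0) : ∃ j, (ζ j : ℂ) = z := by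
  by_contra! hne
  have hperp : ∀ j, ⟪u j, y⟫_ℂ = 0 := fun j =>
    (mul_eq_zero.1 (h.sub_mul_inner_eq_zero hy j)).resolve_left (sub_ne_zero.2 (hne j).symm)
  exact smul_ne_zero hz hy0 (hy ▸ h.apply_eq_zero hperp)

theorem inner_smul_eq_of_apply_eq (hζ : Function.Injective ζ) {j : ι} (hj : ζ j ≠ 0) {y : E}
    (hy : T y = (ζ j : ℂ) • y) : ⟪u j, y⟫_ℂ • u j = y := by
  classical
  refine smul_right_injective E (Complex.ofReal_ne_zero.2 hj) (Eq.trans ?_ hy)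
  refine (hasSum_ite_eq j ((ζ j : ℂ) • (⟪u j, y⟫_ℂ • u j))).unique
    ((h.hasSum_apply y).congr_fun fun i => ?_)
  split_ifs with hij
  · rw [hij, smul_smul]
  · have hne : (ζ j : ℂ) - ζ i ≠ 0 :=
      sub_ne_zero.2 fun e => hij (hζ (Complex.ofReal_injective e)).symm
    rw [(mul_eq_zero.1 (h.sub_mul_inner_eq_zero hy i)).resolve_left hne, mul_zero, zero_smul]

theorem hasSimpleSpectrum (hζ : Function.Injective ζ) (hζ0 : ∀ j, ζ j ≠ 0) :
    HasSimpleSpectrum T ζ where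
  eigenvalues_eq := by
    ext z
    constructor
    · rintro ⟨hz, hev⟩
      obtain ⟨y, hy⟩ := hev.exists_hasEigenvector
      exact h.exists_eq_of_apply_eq_smul hz hy.apply_eq_smul hy.2
    · rintro ⟨j, rfl⟩
      exact ⟨Complex.ofReal_ne_zero.2 (hζ0 j), Module.End.hasEigenvalue_of_hasEigenvector
        ⟨Module.End.mem_eigenspace_iff.2 (h.apply_vec j), h.orthonormal.ne_zero j⟩⟩
  finrank_eigenspace j := by
    refine finrank_eq_one_iff'.2 ⟨⟨u j, Module.End.mem_eigenspace_iff.2 (h.apply_vec j)⟩,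
      fun e => h.orthonormal.ne_zero j (congrArg Subtype.val e), fun w => ?_⟩
    exact ⟨⟪u j, w⟫_ℂ, Subtype.ext (h.inner_smul_eq_of_apply_eq hζ (hζ0 j)
      (Module.End.mem_eigenspace_iff.1 w.2))⟩

theorem hasSum_norm_sq_basis {κ : Type*} (e : HilbertBasis κ ℂ E)
    (hζ : Summable fun j => ζ j ^ 2) : HasSum (fun n => ‖T (e n)‖ ^ 2) (∑' j, ζ j ^ 2) := by
  let f : ι × κ → ℝ := fun q => ζ q.1 ^ 2 * ‖⟪u q.1, e q.2⟫_ℂ‖ ^ 2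
  have hrow : ∀ j, HasSum (fun n => f (j, n)) (ζ j ^ 2) := fun j => by
    simpa only [f, norm_inner_symm, h.orthonormal.norm_eq_one, one_pow, mul_one] using
      (hasSum_norm_inner_sq e (u j)).mul_left (ζ j ^ 2)
  have hf : Summable f := (summable_prod_of_nonneg fun q => by positivity).2
    ⟨fun j => (hrow j).summable, by simpa only [(hrow _).tsum_eq] using hζ⟩
  have hsum : HasSum f (∑' j, ζ j ^ 2) := by
    rw [← tsum_congr fun j => (hrow j).tsum_eq, ← hf.tsum_prod]
    exact hf.hasSum
  exact ((Equiv.prodComm κ ι).hasSum_iff.2 hsum).prod_fiberwise fun n => h.hasSum_norm_sq (e n)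

theorem conj_isometry {F : Type*} [NormedAddCommGroup F] [InnerProductSpace ℂ F] [CompleteSpace E]
    [CompleteSpace F] (W : E →ₗᵢ[ℂ] F) :
    IsDiagonalAlong (W.toContinuousLinearMap ∘L T ∘L
      ContinuousLinearMap.adjoint W.toContinuousLinearMap) ζ fun j => W (u j) where
  orthonormal := h.orthonormal.comp_linearIsometry W
  hasSum_apply x := by
    have hsum := (h.hasSum_apply (ContinuousLinearMap.adjoint W.toContinuousLinearMap x)).mapL
      W.toContinuousLinearMap
    simp only [map_smul, ContinuousLinearMap.adjoint_inner_right] at hsum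
    exact hsum

omit h in
theorem eq_zero_of_apply_eq_zero {e : HilbertBasis ι ℂ E} (h : IsDiagonalAlong T ζ e)
    (hζ0 : ∀ j, ζ j ≠ 0) {x : E} (hx : T x = 0) : x = 0 :=
  eq_of_forall_inner_eq e fun j => by
    have hinner := h.inner_apply j x
    rw [hx, inner_zero_right, eq_comm] at hinner
    rw [inner_zero_right]
    exact (mul_eq_zero.1 hinner).resolve_left (Complex.ofReal_ne_zero.2 (hζ0 j))

end IsDiagonalAlong

section Existence

variable [CompleteSpace E]

theorem exists_isDiagonalAlong (hu : Orthonormal ℂ u) {C : ℝ} (hC : 0 ≤ C) (hζ : ∀ j, |ζ j| ≤ C) :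
    ∃ T : E →L[ℂ] E, IsDiagonalAlong T ζ u := by
  have hle : ∀ x j, ‖(ζ j : ℂ) * ⟪u j, x⟫_ℂ‖ ^ 2 ≤ C ^ 2 * ‖⟪u j, x⟫_ℂ‖ ^ 2 := fun x j => by
    rw [norm_mul, mul_pow, Complex.norm_real, Real.norm_eq_abs]
    gcongr
    exact hζ j
  have hcoef : ∀ x, Summable fun j => C ^ 2 * ‖⟪u j, x⟫_ℂ‖ ^ 2 := fun x =>
    (hu.inner_products_summable (x := x)).mul_left (C ^ 2)
  have hs : ∀ x, Summable fun j => ((ζ j : ℂ) * ⟪u j, x⟫_ℂ) • u j := fun x =>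
    summable_smul_of_summable_norm_sq hu <|
      (hcoef x).of_nonneg_of_le (fun j => by positivity) (hle x)
  let L : E →ₗ[ℂ] E :=
    { toFun := fun x => ∑' j, ((ζ j : ℂ) * ⟪u j, x⟫_ℂ) • u j
      map_add' := fun x y => by
        simp only [inner_add_right, mul_add, add_smul, (hs x).tsum_add (hs y)]
      map_smul' := fun a x => by
        simp only [inner_smul_right, mul_left_comm, mul_smul a, (hs x).tsum_const_smul,
          RingHom.id_apply] }
  refine ⟨L.mkContinuous C fun x => ?_, hu, fun x => (hs x).hasSum⟩
  refine le_of_sq_le_sq ?_ (by positivity)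
  calc ‖L x‖ ^ 2 ≤ ∑' j, C ^ 2 * ‖⟪u j, x⟫_ℂ‖ ^ 2 :=
        hasSum_le (hle x) (hasSum_norm_sq_of_hasSum_smul hu (hs x).hasSum) (hcoef x).hasSum
    _ = C ^ 2 * ∑' j, ‖⟪u j, x⟫_ℂ‖ ^ 2 := tsum_mul_left
    _ ≤ (C * ‖x‖) ^ 2 := by
        rw [mul_pow]
        gcongr
        exact hu.tsum_inner_products_le x

theorem apply_eq_zero_of_forall_eigenvector (hcomp : IsCompactOperator T) (hsymm : T.IsSymmetric)
    {x : E} (hx : ∀ (z : ℂ) (y : E), z ≠ 0 → T y = z • y → ⟪y, x⟫_ℂ = 0) : T x = 0 := by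
  have hmem : T x ∈ (⨆ z, Module.End.eigenspace (T : Module.End ℂ E) z)ᗮ := by
    rw [← Submodule.iInf_orthogonal, Submodule.mem_iInf]
    refine fun z => (Submodule.mem_orthogonal _ _).2 fun y hy => ?_
    have hTy : T y = z • y := Module.End.mem_eigenspace_iff.1 hy
    rw [← show ⟪T y, x⟫_ℂ = ⟪y, T x⟫_ℂ from hsymm y x, hTy, inner_smul_left]
    rcases eq_or_ne z 0 with rfl | hz
    · rw [map_zero, zero_mul]
    · rw [hx z y hz hTy, mul_zero]
  rwa [ContinuousLinearMap.orthogonalComplement_iSup_eigenspaces_eq_bot hcomp hsymm,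
    Submodule.mem_bot] at hmem

namespace HasSimpleSpectrum

omit [CompleteSpace E] in
theorem exists_unit_eigenvector (h : HasSimpleSpectrum T ζ) (j : ι) :
    ∃ v : E, ‖v‖ = 1 ∧ T v = (ζ j : ℂ) • v ∧
      ∀ y, T y = (ζ j : ℂ) • y → ∃ a : ℂ, a • v = y := by
  obtain ⟨⟨v, hv⟩, hv0, hspan⟩ := finrank_eq_one_iff'.1 (h.finrank_eigenspace j)
  have hTv : T v = (ζ j : ℂ) • v := Module.End.mem_eigenspace_iff.1 hv
  have hne : v ≠ 0 := fun e => hv0 (Subtype.ext e)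
  have hnorm : (‖v‖ : ℂ) ≠ 0 := Complex.ofReal_ne_zero.2 (norm_ne_zero_iff.2 hne)
  refine ⟨(‖v‖ : ℂ)⁻¹ • v, norm_smul_inv_norm hne, by rw [map_smul, hTv, smul_comm],
    fun y hy => ?_⟩
  obtain ⟨a, ha⟩ := hspan ⟨y, Module.End.mem_eigenspace_iff.2 hy⟩
  refine ⟨a * ‖v‖, ?_⟩
  rw [smul_smul, mul_assoc, mul_inv_cancel₀ hnorm, mul_one]
  exact congrArg Subtype.val ha

theorem exists_isDiagonalAlong (h : HasSimpleSpectrum T ζ) (hsymm : T.IsSymmetric)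
    (hcomp : IsCompactOperator T) (hζ : Function.Injective ζ) :
    ∃ u : ι → E, IsDiagonalAlong T ζ u := by
  choose u hnorm hTu hspan using h.exists_unit_eigenvector
  have hinner : ∀ j x, ⟪u j, T x⟫_ℂ = ζ j * ⟪u j, x⟫_ℂ := fun j x => by
    rw [← Complex.conj_ofReal, ← inner_smul_left, ← hTu]
    exact (hsymm (u j) x).symm
  have hu : Orthonormal ℂ u := by
    refine ⟨hnorm, fun i j hij => ?_⟩
    have hdiff : ((ζ j : ℂ) - ζ i) * ⟪u i, u j⟫_ℂ = 0 := by
      rw [sub_mul, ← hinner, hTu, inner_smul_right, sub_self]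
    refine (mul_eq_zero.1 hdiff).resolve_left (sub_ne_zero.2 fun e => ?_)
    exact hij (hζ (Complex.ofReal_injective e)).symm
  have hker : ∀ x, (∀ j, ⟪u j, x⟫_ℂ = 0) → T x = 0 := fun x hx => by
    refine apply_eq_zero_of_forall_eigenvector hcomp hsymm fun z y hz hy => ?_
    by_cases hy0 : y = 0
    · rw [hy0, inner_zero_left]
    obtain ⟨j, rfl⟩ : z ∈ Set.range fun j => (ζ j : ℂ) := h.eigenvalues_eq ▸
      ⟨hz, Module.End.hasEigenvalue_of_hasEigenvector ⟨Module.End.mem_eigenspace_iff.2 hy, hy0⟩⟩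
    obtain ⟨a, rfl⟩ := hspan j y hy
    rw [inner_smul_left, hx, mul_zero]
  refine ⟨u, hu, fun x => ?_⟩
  simp only [← hinner]
  refine hasSum_inner_smul_of_forall_orthogonal hu fun y hy => ?_
  rw [← show ⟪T y, x⟫_ℂ = ⟪y, T x⟫_ℂ from hsymm y x, hker y hy, inner_zero_left]

end HasSimpleSpectrum

end Existence

end Diagonal

section RankOneGap

variable {E : Type*} [NormedAddCommGroup E] [InnerProductSpace ℂ E]

/-- The identity `A* A = B* B + ⟪g, ·⟫ g`, stated through inner products. -/
def RankOneGap (A B : E →L[ℂ] E) (g : E) : Prop :=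
  ∀ x y, ⟪A x, A y⟫_ℂ = ⟪B x, B y⟫_ℂ + ⟪x, g⟫_ℂ * ⟪g, y⟫_ℂ

variable {A B : E →L[ℂ] E} {g : E} {ζ γ : ℕ → ℝ} {u v : ℕ → E}

namespace RankOneGap

section

variable (h : RankOneGap A B g)
include h

theorem norm_sq_apply (x : E) : ‖A x‖ ^ 2 = ‖B x‖ ^ 2 + ‖⟪g, x⟫_ℂ‖ ^ 2 := by
  have hx := h x x
  rw [← inner_conj_symm x g, RCLike.conj_mul, inner_self_eq_norm_sq_to_K,
    inner_self_eq_norm_sq_to_K] at hx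
  exact_mod_cast hx

theorem norm_apply_le (x : E) : ‖B x‖ ≤ ‖A x‖ :=
  le_of_sq_le_sq (by rw [h.norm_sq_apply]; exact le_add_of_nonneg_right (sq_nonneg _))
    (norm_nonneg _)

theorem sub_mul_inner (hA : IsDiagonalAlong A ζ u) (hB : IsDiagonalAlong B γ v) (m j : ℕ) :
    ((ζ j ^ 2 - γ m ^ 2 : ℝ) : ℂ) * ⟪v m, u j⟫_ℂ = ⟪v m, g⟫_ℂ * ⟪g, u j⟫_ℂ := by
  have hAA : ⟪A (v m), A (u j)⟫_ℂ = ζ j ^ 2 * ⟪v m, u j⟫_ℂ := by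
    rw [show ⟪A (v m), A (u j)⟫_ℂ = ⟪v m, A (A (u j))⟫_ℂ from hA.isSymmetric _ _, hA.apply_vec,
      map_smul, hA.apply_vec, smul_smul, inner_smul_right, sq]
  have hBB : ⟪B (v m), B (u j)⟫_ℂ = γ m ^ 2 * ⟪v m, u j⟫_ℂ := by
    rw [hB.apply_vec, inner_smul_left, hB.inner_apply, Complex.conj_ofReal, ← mul_assoc, sq]
  push_cast
  linear_combination h (v m) (u j) - hAA + hBB

theorem inner_eq_div (hA : IsDiagonalAlong A ζ u) (hB : IsDiagonalAlong B γ v) {m j : ℕ}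
    (hne : ζ j ^ 2 ≠ γ m ^ 2) :
    ⟪v m, u j⟫_ℂ = ⟪v m, g⟫_ℂ * ⟪g, u j⟫_ℂ / ((ζ j ^ 2 - γ m ^ 2 : ℝ) : ℂ) :=
  eq_div_of_mul_eq (Complex.ofReal_ne_zero.2 (sub_ne_zero.2 hne))
    ((mul_comm _ _).trans (h.sub_mul_inner hA hB m j))

variable (hA : IsDiagonalAlong A ζ u)
include hA

theorem apply_eq_zero_and_inner_eq_zero {x : E} (hx : ∀ j, ⟪u j, x⟫_ℂ = 0) :
    B x = 0 ∧ ⟪g, x⟫_ℂ = 0 := by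
  have hsum := h.norm_sq_apply x
  rw [hA.apply_eq_zero hx, norm_zero, zero_pow two_ne_zero, eq_comm,
    add_eq_zero_iff_of_nonneg (sq_nonneg _) (sq_nonneg _)] at hsum
  simpa using hsum

theorem inner_vec_eq_zero (hB : IsDiagonalAlong B γ v) {m : ℕ} (hγ : γ m ≠ 0) {x : E}
    (hx : ∀ j, ⟪u j, x⟫_ℂ = 0) : ⟪v m, x⟫_ℂ = 0 := by
  have hBx := hB.inner_apply m x
  rw [(h.apply_eq_zero_and_inner_eq_zero hA hx).1, inner_zero_right, eq_comm] at hBx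
  exact (mul_eq_zero.1 hBx).resolve_left (Complex.ofReal_ne_zero.2 hγ)

variable [CompleteSpace E]

theorem hasSum_inner_smul_gap : HasSum (fun j => ⟪u j, g⟫_ℂ • u j) g :=
  hasSum_inner_smul_of_forall_orthogonal hA.orthonormal fun x hx => by
    rw [← inner_conj_symm, (h.apply_eq_zero_and_inner_eq_zero hA hx).2, map_zero]

theorem hasSum_inner_smul_vec (hB : IsDiagonalAlong B γ v) {m : ℕ} (hγ : γ m ≠ 0) :
    HasSum (fun j => ⟪u j, v m⟫_ℂ • u j) (v m) :=
  hasSum_inner_smul_of_forall_orthogonal hA.orthonormal fun x hx => by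
    rw [← inner_conj_symm, h.inner_vec_eq_zero hA hB hγ hx, map_zero]

theorem hasSum_inner_smul_apply (hB : B.IsSymmetric) (y : E) :
    HasSum (fun j => ⟪u j, B y⟫_ℂ • u j) (B y) :=
  hasSum_inner_smul_of_forall_orthogonal hA.orthonormal fun x hx => by
    rw [← show ⟪B x, y⟫_ℂ = ⟪x, B y⟫_ℂ from hB x y, (h.apply_eq_zero_and_inner_eq_zero hA hx).1,
      inner_zero_left]

theorem hasSum_norm_inner_gap_sq (hB : IsDiagonalAlong B γ v) (hζ : Summable fun j => ζ j ^ 2)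
    (hγ : Summable fun m => γ m ^ 2) :
    HasSum (fun j => ‖⟪g, u j⟫_ℂ‖ ^ 2) (∑' j, (ζ j ^ 2 - γ j ^ 2)) := by
  obtain ⟨s, e, -⟩ := exists_hilbertBasis ℂ E
  have htrace : HasSum (fun n => ‖⟪g, e n⟫_ℂ‖ ^ 2) (∑' j, ζ j ^ 2 - ∑' m, γ m ^ 2) :=
    ((hA.hasSum_norm_sq_basis e hζ).sub (hB.hasSum_norm_sq_basis e hγ)).congr_fun fun n => by
      rw [h.norm_sq_apply, add_sub_cancel_left]
  have hnorm : ‖g‖ ^ 2 = ∑' j, (ζ j ^ 2 - γ j ^ 2) := by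
    rw [hζ.tsum_sub hγ]
    refine HasSum.unique ?_ htrace
    simpa only [norm_inner_symm g] using hasSum_norm_inner_sq (𝕜 := ℂ) e g
  rw [← hnorm]
  simpa only [norm_inner_symm g] using
    hasSum_norm_sq_of_hasSum_smul hA.orthonormal (h.hasSum_inner_smul_gap hA)

variable (hB : IsDiagonalAlong B γ v) {m : ℕ} (hγ : γ m ≠ 0) (hne : ∀ j, ζ j ^ 2 ≠ γ m ^ 2)
include hB hγ hne

theorem inner_gap_vec_ne_zero : ⟪v m, g⟫_ℂ ≠ 0 := fun hzero => by
  refine hB.orthonormal.ne_zero m ((h.hasSum_inner_smul_vec hA hB hγ).unique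
    (hasSum_zero.congr_fun fun j => ?_))
  rw [← inner_conj_symm, h.inner_eq_div hA hB (hne j), hzero, zero_mul, zero_div, map_zero,
    zero_smul]

theorem hasSum_norm_inner_gap_sq_div :
    HasSum (fun j => ‖⟪g, u j⟫_ℂ‖ ^ 2 / (ζ j ^ 2 - γ m ^ 2)) 1 := by
  have hg := hasSum_inner_right (𝕜 := ℂ) (h.hasSum_inner_smul_gap hA) (v m)
  have hfactor : ∀ j, ⟪v m, ⟪u j, g⟫_ℂ • u j⟫_ℂ =
      ⟪v m, g⟫_ℂ * ((‖⟪g, u j⟫_ℂ‖ ^ 2 / (ζ j ^ 2 - γ m ^ 2) : ℝ) : ℂ) := fun j => by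
    rw [inner_smul_right, h.inner_eq_div hA hB (hne j), ← inner_conj_symm (u j) g]
    push_cast
    rw [← Complex.conj_mul']
    ring
  simp only [hfactor] at hg
  have hg0 := h.inner_gap_vec_ne_zero hA hB hγ hne
  have hone := hg.mul_left (⟪v m, g⟫_ℂ)⁻¹
  simp only [inv_mul_cancel_left₀ hg0, inv_mul_cancel₀ hg0] at hone
  exact Complex.hasSum_ofReal.1 (by rwa [Complex.ofReal_one])

theorem norm_inner_gap_vec_sq :
    ‖⟪v m, g⟫_ℂ‖ ^ 2 = (∑' j, ‖⟪g, u j⟫_ℂ‖ ^ 2 / (ζ j ^ 2 - γ m ^ 2) ^ 2)⁻¹ := by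
  have hv := hasSum_norm_sq_of_hasSum_smul hA.orthonormal (h.hasSum_inner_smul_vec hA hB hγ)
  have hfactor : ∀ j, ‖⟪u j, v m⟫_ℂ‖ ^ 2 =
      ‖⟪v m, g⟫_ℂ‖ ^ 2 * (‖⟪g, u j⟫_ℂ‖ ^ 2 / (ζ j ^ 2 - γ m ^ 2) ^ 2) := fun j => by
    rw [norm_inner_symm, h.inner_eq_div hA hB (hne j), norm_div, norm_mul, Complex.norm_real,
      Real.norm_eq_abs, div_pow, sq_abs, mul_pow, mul_div_assoc]
  simp only [hfactor, hB.orthonormal.norm_eq_one, one_pow] at hv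
  exact eq_inv_of_mul_eq_one_left (tsum_mul_left.symm.trans hv.tsum_eq)

end

end RankOneGap

/-- The square `|⟪v m, g⟫|²` of a coefficient of the gap vector along an eigenvector of the smaller
operator, in terms of the eigenvalues. -/
def gapWeight (ζ γ : ℕ → ℝ) (m : ℕ) : ℝ :=
  (∑' j, Interlacing.weight (ζ ^ 2) (γ ^ 2) j / (ζ j ^ 2 - γ m ^ 2) ^ 2)⁻¹

/-- The matrix of the smaller operator along the eigenvectors of the larger one, up to the factors
`⟪u i, g⟫ ⟪g, u j⟫` which depend on the choice of phases of the eigenvectors. -/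
def kernelCoeff (ζ γ : ℕ → ℝ) (i j : ℕ) : ℝ :=
  ∑' m, γ m * gapWeight ζ γ m / ((ζ i ^ 2 - γ m ^ 2) * (ζ j ^ 2 - γ m ^ 2))

/-- The phase-independent products `⟪x n, u j⟫ ⟪u j, g⟫` for the chain `A (x 0) = g`,
`A (x (n + 1)) = B (x n)`. -/
def chainCoeff (ζ γ : ℕ → ℝ) : ℕ → ℕ → ℝ
  | 0, j => Interlacing.weight (ζ ^ 2) (γ ^ 2) j / ζ j
  | n + 1, j => Interlacing.weight (ζ ^ 2) (γ ^ 2) j / ζ j *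
      ∑' i, chainCoeff ζ γ n i * kernelCoeff ζ γ i j

namespace RankOneGap

variable [CompleteSpace E] (h : RankOneGap A B g) (hA : IsDiagonalAlong A ζ u)
  (hB : IsDiagonalAlong B γ v) (hζγ : Interlacing (ζ ^ 2) (γ ^ 2))
include h hA hB hζγ

theorem norm_inner_gap_sq_eq_weight (j : ℕ) :
    ‖⟪g, u j⟫_ℂ‖ ^ 2 = Interlacing.weight (ζ ^ 2) (γ ^ 2) j :=
  congrFun (hζγ.eq_weight (fun _ => sq_nonneg _)
    (fun m => h.hasSum_norm_inner_gap_sq_div hA hB (hζγ.right_ne_zero m)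
      fun i => hζγ.pole_ne_root i m)
    (h.hasSum_norm_inner_gap_sq hA hB hζγ.summable_pole hζγ.summable_root)) j

theorem norm_inner_gap_vec_sq_eq_gapWeight (m : ℕ) : ‖⟪v m, g⟫_ℂ‖ ^ 2 = gapWeight ζ γ m := by
  rw [h.norm_inner_gap_vec_sq hA hB (hζγ.right_ne_zero m)
    fun i => hζγ.pole_ne_root i m, gapWeight]
  simp only [h.norm_inner_gap_sq_eq_weight hA hB hζγ]

theorem inner_apply_vec_eq_kernelCoeff (i j : ℕ) :
    ⟪u i, B (u j)⟫_ℂ = ⟪u i, g⟫_ℂ * ⟪g, u j⟫_ℂ * kernelCoeff ζ γ i j := by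
  have hterm : ∀ m, ⟪u i, ((γ m : ℂ) * ⟪v m, u j⟫_ℂ) • v m⟫_ℂ = ⟪u i, g⟫_ℂ * ⟪g, u j⟫_ℂ *
      ((γ m * gapWeight ζ γ m / ((ζ i ^ 2 - γ m ^ 2) * (ζ j ^ 2 - γ m ^ 2)) : ℝ) : ℂ) := fun m => by
    rw [inner_smul_right, ← inner_conj_symm (u i) (v m),
      h.inner_eq_div hA hB (hζγ.pole_ne_root i m), h.inner_eq_div hA hB (hζγ.pole_ne_root j m),
      ← h.norm_inner_gap_vec_sq_eq_gapWeight hA hB hζγ]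
    push_cast
    rw [← Complex.mul_conj', map_div₀, map_mul, inner_conj_symm g]
    simp only [map_sub, map_pow, Complex.conj_ofReal, inner_conj_symm, div_eq_mul_inv, mul_inv]
    ring
  rw [← (hasSum_inner_right (hB.hasSum_apply (u j)) (u i)).tsum_eq, tsum_congr hterm, tsum_mul_left,
    kernelCoeff, Complex.ofReal_tsum]

variable {x : ℕ → E} (hx0 : A (x 0) = g) (hx : ∀ n, A (x (n + 1)) = B (x n))
include hx0 hx

theorem inner_mul_inner_eq_chainCoeff (n j : ℕ) :
    ⟪x n, u j⟫_ℂ * ⟪u j, g⟫_ℂ = chainCoeff ζ γ n j := by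
  have hA_inner : ∀ j y, ⟪y, u j⟫_ℂ = ⟪A y, u j⟫_ℂ / ζ j := fun j y => by
    rw [show ⟪A y, u j⟫_ℂ = ⟪y, A (u j)⟫_ℂ from hA.isSymmetric _ _, hA.apply_vec, inner_smul_right,
      mul_div_cancel_left₀ _ (Complex.ofReal_ne_zero.2 (hζγ.left_ne_zero j))]
  have hweight : ∀ j, ⟪g, u j⟫_ℂ * ⟪u j, g⟫_ℂ = Interlacing.weight (ζ ^ 2) (γ ^ 2) j := fun j => by
    rw [← h.norm_inner_gap_sq_eq_weight hA hB hζγ, ← inner_conj_symm (u j) g, Complex.mul_conj']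
    push_cast
    rfl
  induction n generalizing j with
  | zero =>
    rw [hA_inner, hx0, chainCoeff, Complex.ofReal_div, ← hweight]
    ring
  | succ n ih =>
    have hterm : ∀ i, ⟪x n, ⟪u i, B (u j)⟫_ℂ • u i⟫_ℂ =
        ⟪g, u j⟫_ℂ * ((chainCoeff ζ γ n i * kernelCoeff ζ γ i j : ℝ) : ℂ) := fun i => by
      rw [inner_smul_right, h.inner_apply_vec_eq_kernelCoeff hA hB hζγ, Complex.ofReal_mul, ← ih]
      ring
    rw [hA_inner, hx, show ⟪B (x n), u j⟫_ℂ = ⟪x n, B (u j)⟫_ℂ from hB.isSymmetric _ _,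
      ← (hasSum_inner_right (h.hasSum_inner_smul_apply hA hB.isSymmetric (u j)) (x n)).tsum_eq,
      tsum_congr hterm, tsum_mul_left, ← Complex.ofReal_tsum, chainCoeff, Complex.ofReal_mul,
      Complex.ofReal_div, ← hweight]
    ring

theorem inner_gap_eq_tsum_chainCoeff (n : ℕ) :
    ⟪x n, g⟫_ℂ = ((∑' j, chainCoeff ζ γ n j : ℝ) : ℂ) := by
  rw [← (hasSum_inner_right (h.hasSum_inner_smul_gap hA) (x n)).tsum_eq, Complex.ofReal_tsum]
  refine tsum_congr fun j => ?_
  rw [inner_smul_right, mul_comm, h.inner_mul_inner_eq_chainCoeff hA hB hζγ hx0 hx]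

end RankOneGap

end RankOneGap

section Hankel

/-- The canonical Hilbert basis of `ℓ²(ℕ, ℂ)`. -/
def l2Basis : HilbertBasis ℕ ℂ L2 :=
  HilbertBasis.ofRepr (LinearIsometryEquiv.refl ℂ L2)

theorem inner_l2Basis (n : ℕ) (x : L2) : ⟪l2Basis n, x⟫_ℂ = (x : ℕ → ℂ) n :=
  (l2Basis.repr_apply_apply x n).symm

theorem summable_comp_add_iff {f : ℕ → ℝ} (hf : ∀ k, 0 ≤ f k) :
    (Summable fun q : ℕ × ℕ => f (q.1 + q.2)) ↔ Summable fun k : ℕ => ((k : ℝ) + 1) * f k := by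
  have hfiber : ∀ k : ℕ, ∑' q : Finset.HasAntidiagonal.antidiagonal k, f (q.1.1 + q.1.2) =
      ((k : ℝ) + 1) * f k := fun k => by
    rw [tsum_congr fun q => congrArg f (Finset.HasAntidiagonal.mem_antidiagonal.1 q.2),
      tsum_fintype]
    simp
  rw [← Finset.HasAntidiagonal.sigmaAntidiagonalEquivProd.summable_iff,
    summable_sigma_of_nonneg fun q => by exact hf _]
  simp only [Function.comp_def, Finset.HasAntidiagonal.sigmaAntidiagonalEquivProd_apply, hfiber,
    and_iff_right_iff_imp]
  exact fun _ k => (hasSum_fintype _).summable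

theorem inH12_iff_summable (c : ℕ → ℂ) :
    InH12 c ↔ Summable fun k : ℕ => ((k : ℝ) + 1) * ‖c k‖ ^ 2 := by
  have hMem : Memℓp c 2 ↔ Summable fun k => ‖c k‖ ^ 2 := by
    rw [memℓp_gen_iff (by norm_num)]
    simp
  rw [InH12, hMem]
  simp only [add_mul, one_mul]
  refine ⟨fun h => h.2.add h.1, fun h => ⟨?_, ?_⟩⟩
  · exact h.of_nonneg_of_le (fun k => by positivity) fun k =>
      le_add_of_nonneg_left (by positivity)
  · exact h.of_nonneg_of_le (fun k => by positivity) fun k =>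
      le_add_of_nonneg_right (by positivity)

namespace IsHankelOp

variable {c : ℕ → ℂ} {Γ Γt : L2 →L[ℂ] L2}

theorem inner_l2Basis_apply (h : IsHankelOp c Γ) (n p : ℕ) :
    ⟪l2Basis n, Γ (l2Basis p)⟫_ℂ = c (n + p) := by
  have hbasis : ∀ k, (l2Basis p : ℕ → ℂ) k = if p = k then 1 else 0 := fun k => by
    rw [← inner_l2Basis, orthonormal_iff_ite.1 l2Basis.orthonormal]
    simp only [eq_comm]
  rw [inner_l2Basis, h]
  simp only [hbasis, mul_ite, mul_one, mul_zero, tsum_ite_eq']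

theorem of_inner_l2Basis_apply (h : ∀ n p, ⟪l2Basis n, Γ (l2Basis p)⟫_ℂ = c (n + p)) :
    IsHankelOp c Γ := fun x n => by
  have hΓx := hasSum_inner_right (𝕜 := ℂ) ((l2Basis.hasSum_repr x).mapL Γ) (l2Basis n)
  rw [← inner_l2Basis, ← hΓx.tsum_eq]
  refine tsum_congr fun p => ?_
  rw [map_smul, inner_smul_right, h, mul_comm]
  rfl

theorem inH12_iff (h : IsHankelOp c Γ) : InH12 c ↔ Summable fun n => ‖Γ (l2Basis n)‖ ^ 2 := by
  have hcol : ∀ n, HasSum (fun p => ‖c (n + p)‖ ^ 2) (‖Γ (l2Basis n)‖ ^ 2) := fun n => by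
    simpa only [h.inner_l2Basis_apply, add_comm n] using
      hasSum_norm_inner_sq l2Basis (Γ (l2Basis n))
  rw [inH12_iff_summable, ← summable_comp_add_iff fun _ => sq_nonneg _,
    summable_prod_of_nonneg fun _ => sq_nonneg _]
  simp only [(hcol _).tsum_eq, (hcol _).summable, implies_true, true_and]

theorem isSymmetric (h : IsHankelOp c Γ) (hc : ∀ n, conj (c n) = c n) : Γ.IsSymmetric := by
  refine ContinuousLinearMap.isSelfAdjoint_iff_isSymmetric.1 (ContinuousLinearMap.ext_on
    (Submodule.dense_iff_topologicalClosure_eq_top.2 l2Basis.dense_span) ?_)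
  rintro _ ⟨p, rfl⟩
  refine lp.ext (funext fun n => ?_)
  rw [← inner_l2Basis, ← inner_l2Basis, ContinuousLinearMap.star_eq_adjoint,
    ContinuousLinearMap.adjoint_inner_right, ← inner_conj_symm, h.inner_l2Basis_apply,
    h.inner_l2Basis_apply, hc, add_comm]

theorem apply_shift (h : IsHankelOp c Γ) (ht : IsHankelOp (shiftSeq c) Γt) (x : L2) (n : ℕ) :
    (Γt x : ℕ → ℂ) n = (Γ x : ℕ → ℂ) (n + 1) := by
  simp only [h x, ht x, shiftSeq, add_right_comm]

theorem apply_l2Basis_succ (h : IsHankelOp c Γ) (ht : IsHankelOp (shiftSeq c) Γt) (n : ℕ) :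
    Γ (l2Basis (n + 1)) = Γt (l2Basis n) :=
  lp.ext <| funext fun k => by
    rw [← inner_l2Basis, ← inner_l2Basis, h.inner_l2Basis_apply, ht.inner_l2Basis_apply]
    rfl

theorem rankOneGap (h : IsHankelOp c Γ) (ht : IsHankelOp (shiftSeq c) Γt)
    (hc : ∀ n, conj (c n) = c n) : RankOneGap Γ Γt (Γ (l2Basis 0)) := fun x y => by
  have hsymm := h.isSymmetric hc
  have hx := lp.hasSum_inner (𝕜 := ℂ) (Γ x) (Γ y)
  rw [← hx.tsum_eq, hx.summable.tsum_eq_zero_add, ← (lp.hasSum_inner (Γt x) (Γt y)).tsum_eq,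
    add_comm, ← show ⟪Γ x, l2Basis 0⟫_ℂ = ⟪x, Γ (l2Basis 0)⟫_ℂ from hsymm _ _,
    show ⟪Γ (l2Basis 0), y⟫_ℂ = ⟪l2Basis 0, Γ y⟫_ℂ from hsymm _ _,
    ← inner_conj_symm (Γ x) (l2Basis 0), inner_l2Basis, inner_l2Basis, ← RCLike.inner_apply']
  simp only [h.apply_shift ht]

theorem eq_tsum_chainCoeff (h : IsHankelOp c Γ) (ht : IsHankelOp (shiftSeq c) Γt)
    (hc : ∀ n, conj (c n) = c n) (hH12 : InH12 c) {ζ γ : ℕ → ℝ}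
    (hΓ : HasSimpleSpectrum Γ ζ) (hΓt : HasSimpleSpectrum Γt γ)
    (hζγ : Interlacing (ζ ^ 2) (γ ^ 2)) (n : ℕ) :
    c n = ((∑' j, chainCoeff ζ γ n j : ℝ) : ℂ) := by
  have hgap := h.rankOneGap ht hc
  have hsummable := h.inH12_iff.1 hH12
  have hsummable_shift : Summable fun n => ‖Γt (l2Basis n)‖ ^ 2 :=
    hsummable.of_nonneg_of_le (fun _ => sq_nonneg _) fun n =>
      pow_le_pow_left₀ (norm_nonneg _) (hgap.norm_apply_le _) 2
  obtain ⟨u, hu⟩ := hΓ.exists_isDiagonalAlong (h.isSymmetric hc)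
    (isCompactOperator_of_summable_norm_sq l2Basis hsummable)
    hζγ.left_injective
  obtain ⟨v, hv⟩ := hΓt.exists_isDiagonalAlong (ht.isSymmetric fun n => hc (n + 1))
    (isCompactOperator_of_summable_norm_sq l2Basis hsummable_shift)
    hζγ.right_injective
  rw [← hgap.inner_gap_eq_tsum_chainCoeff hu hv hζγ rfl (h.apply_l2Basis_succ ht) n,
    h.inner_l2Basis_apply, add_zero]

end IsHankelOp

end Hankel

section BackwardShift

variable {E : Type*} [NormedAddCommGroup E] [InnerProductSpace ℂ E]

theorem apply_starProjection_of_apply_eq_smul {T : E →L[ℂ] E} (hT : T.IsSymmetric)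
    {K : Submodule ℂ E} [K.HasOrthogonalProjection] (hK : ∀ x ∈ K, T x ∈ K) {z : ℂ} {y : E}
    (hy : T y = z • y) : T (K.starProjection y) = z • K.starProjection y := by
  rw [← map_smul]
  refine (Submodule.eq_starProjection_of_mem_orthogonal
    (hK _ (K.starProjection_apply_mem y)) ?_).symm
  rw [← hy, ← map_sub]
  exact LinearMap.IsSymmetric.orthogonalComplement_mem_invtSubmodule hT hK
    (K.sub_starProjection_mem_orthogonal y)

theorem denseRange_of_isSymmetric [CompleteSpace E] {T : E →L[ℂ] E} (hT : T.IsSymmetric)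
    (hinj : ∀ x, T x = 0 → x = 0) : DenseRange T := by
  refine Submodule.dense_iff_topologicalClosure_eq_top (s := T.range).2 ?_
  rw [Submodule.topologicalClosure_eq_top_iff, LinearMap.IsSymmetric.orthogonal_range hT,
    Submodule.eq_bot_iff]
  exact hinj

/-- The largest subspace of `ker ⟪q, ·⟫` invariant under `T`. -/
def unobservable (T : E →L[ℂ] E) (q : E) : Submodule ℂ E :=
  ⨅ k : ℕ, (innerSL ℂ q ∘L T ^ k).ker

/-- An abstract version of the backward shift `T` on `ℓ²` and a Hankel operator `D`: there `q` is
the first basis vector, `1 - T* T` is the projection onto it, and `T D` is the shifted Hankel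
operator. -/
structure BackwardShiftModel (D T : E →L[ℂ] E) (q : E) : Prop where
  isSymmetric : D.IsSymmetric
  isSymmetric_comp : (T ∘L D).IsSymmetric
  rankOneGap : RankOneGap 1 T q

theorem mem_unobservable {T : E →L[ℂ] E} {q y : E} :
    y ∈ unobservable T q ↔ ∀ k, ⟪q, (T ^ k) y⟫_ℂ = 0 := by
  rw [unobservable, Submodule.mem_iInf]
  rfl

theorem isClosed_unobservable (T : E →L[ℂ] E) (q : E) :
    IsClosed (unobservable T q : Set E) := by
  rw [unobservable, Submodule.coe_iInf]
  exact isClosed_iInter fun k => (innerSL ℂ q ∘L T ^ k).isClosed_ker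

namespace RankOneGap

variable {T : E →L[ℂ] E} {q : E} (h : RankOneGap 1 T q)
include h

theorem norm_sq_pow_apply (n : ℕ) (x : E) :
    ‖(T ^ n) x‖ ^ 2 = ‖(T ^ (n + 1)) x‖ ^ 2 + ‖⟪q, (T ^ n) x⟫_ℂ‖ ^ 2 := by
  rw [pow_succ' T, mul_apply_eq_comp]
  exact h.norm_sq_apply ((T ^ n) x)

theorem norm_pow_apply_le (n : ℕ) (x : E) : ‖(T ^ n) x‖ ≤ ‖x‖ := by
  induction n with
  | zero => rw [pow_zero, one_apply_eq_self]
  | succ n ih => exact pow_succ' T n ▸ (h.norm_apply_le _).trans ih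

theorem inner_pow_apply_pow_apply {y : E} (hy : y ∈ unobservable T q) (n : ℕ) (z : E) :
    ⟪(T ^ n) z, (T ^ n) y⟫_ℂ = ⟪z, y⟫_ℂ := by
  induction n with
  | zero => rw [pow_zero, one_apply_eq_self, one_apply_eq_self]
  | succ n ih =>
    have hgap := h ((T ^ n) z) ((T ^ n) y)
    rw [mem_unobservable.1 hy, mul_zero, add_zero, one_apply_eq_self, one_apply_eq_self, ih] at hgap
    rw [pow_succ', mul_apply_eq_comp, mul_apply_eq_comp, hgap]

theorem isClosed_setOf_tendsto_pow_apply :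
    IsClosed {y | Tendsto (fun n => (T ^ n) y) atTop (𝓝 0)} := by
  refine (LipschitzWith.uniformEquicontinuous (fun n => ⇑(T ^ n)) 1 fun n =>
    LipschitzWith.of_dist_le_mul fun x y => ?_).equicontinuous.isClosed_setOfPred_tendsto
      continuous_const
  rw [dist_eq_norm, dist_eq_norm, ← map_sub, NNReal.coe_one, one_mul]
  exact h.norm_pow_apply_le n _

variable (hT : ∀ y, Tendsto (fun n => (T ^ n) y) atTop (𝓝 0))
include hT

theorem hasSum_norm_inner_pow_apply_sq (y : E) :
    HasSum (fun n => ‖⟪q, (T ^ n) y⟫_ℂ‖ ^ 2) (‖y‖ ^ 2) := by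
  rw [hasSum_iff_tendsto_nat_of_nonneg fun _ => sq_nonneg _]
  have hpartial : ∀ n, ∑ k ∈ Finset.range n, ‖⟪q, (T ^ k) y⟫_ℂ‖ ^ 2 =
      ‖y‖ ^ 2 - ‖(T ^ n) y‖ ^ 2 := fun n => by
    induction n with
    | zero => simp
    | succ n ih =>
      rw [Finset.sum_range_succ, ih, h.norm_sq_pow_apply n]
      ring
  simp_rw [hpartial]
  simpa using ((hT y).norm.pow 2).const_sub (‖y‖ ^ 2)

theorem exists_linearIsometry :
    ∃ W : E →ₗᵢ[ℂ] L2, ∀ y n, ⟪l2Basis n, W y⟫_ℂ = ⟪q, (T ^ n) y⟫_ℂ := by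
  have hMem : ∀ y, Memℓp (fun n => ⟪q, (T ^ n) y⟫_ℂ) 2 := fun y => by
    rw [memℓp_gen_iff (by norm_num)]
    simpa using (h.hasSum_norm_inner_pow_apply_sq hT y).summable
  let W : E →ₗ[ℂ] L2 :=
    { toFun := fun y => ⟨fun n => ⟪q, (T ^ n) y⟫_ℂ, hMem y⟩
      map_add' := fun x y => lp.ext <| funext fun n =>
        (congrArg _ (map_add (T ^ n) x y)).trans (inner_add_right q _ _)
      map_smul' := fun a x => lp.ext <| funext fun n =>
        (congrArg _ (map_smul (T ^ n) a x)).trans (inner_smul_right q _ a) }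
  have hW : ∀ y n, ⟪l2Basis n, W y⟫_ℂ = ⟪q, (T ^ n) y⟫_ℂ := fun y n => inner_l2Basis n (W y)
  refine ⟨⟨W, fun y => ?_⟩, hW⟩
  have hnorm := hasSum_norm_inner_sq l2Basis (W y)
  simp only [hW] at hnorm
  exact (sq_eq_sq₀ (norm_nonneg _) (norm_nonneg _)).1
    (hnorm.unique (h.hasSum_norm_inner_pow_apply_sq hT y))

end RankOneGap

namespace BackwardShiftModel

variable [CompleteSpace E] {D T : E →L[ℂ] E} {q : E} (h : BackwardShiftModel D T q)
include h

theorem inner_pow_apply_comm (n : ℕ) (x y : E) :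
    ⟪(T ^ n) (D x), y⟫_ℂ = ⟪x, (T ^ n) (D y)⟫_ℂ := by
  have hadjoint : ∀ y, D (ContinuousLinearMap.adjoint T y) = T (D y) := fun y =>
    ext_inner_left ℂ fun x => by
      rw [← show ⟪D x, _⟫_ℂ = ⟪x, D _⟫_ℂ from h.isSymmetric _ _,
        ContinuousLinearMap.adjoint_inner_right]
      exact h.isSymmetric_comp x y
  induction n generalizing x y with
  | zero => exact h.isSymmetric x y
  | succ n ih =>
    rw [pow_succ', mul_apply_eq_comp, ← ContinuousLinearMap.adjoint_inner_right, ih, hadjoint,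
      ← pow_succ', pow_succ, mul_apply_eq_comp]

protected theorem comp : BackwardShiftModel (T ∘L D) T q where
  isSymmetric := h.isSymmetric_comp
  isSymmetric_comp := h.inner_pow_apply_comm 2
  rankOneGap := h.rankOneGap

theorem apply_mem_unobservable_of_forall_inner {y : E}
    (hy : ∀ k, ⟪(T ^ k) (D q), y⟫_ℂ = 0) : D y ∈ unobservable T q :=
  mem_unobservable.2 fun k => by rw [← h.inner_pow_apply_comm, hy]

section Compact

variable {ι : Type*} (e : HilbertBasis ι ℂ E) (hsum : Summable fun j => ‖D (e j)‖ ^ 2)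
include hsum

-- `‖T ^ n (D q)‖²` is the decrement of the Hilbert–Schmidt norm from `T ^ n D` to `T ^ (n + 1) D`.
theorem tendsto_pow_apply_apply_gap : Tendsto (fun n => (T ^ n) (D q)) atTop (𝓝 0) := by
  let hs : ℕ → ℝ := fun n => ∑' j, ‖(T ^ n) (D (e j))‖ ^ 2
  have hs_nonneg : ∀ n, 0 ≤ hs n := fun n => tsum_nonneg fun j => sq_nonneg _
  have hsummable : ∀ n, Summable fun j => ‖(T ^ n) (D (e j))‖ ^ 2 := fun n =>
    hsum.of_nonneg_of_le (fun _ => sq_nonneg _) fun j =>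
      pow_le_pow_left₀ (norm_nonneg _) (h.rankOneGap.norm_pow_apply_le n _) 2
  have hstep : ∀ n, ‖(T ^ n) (D q)‖ ^ 2 = hs n - hs (n + 1) := fun n => by
    refine (hasSum_norm_inner_sq e ((T ^ n) (D q))).unique
      (((hsummable n).hasSum.sub (hsummable (n + 1)).hasSum).congr_fun fun j => ?_)
    rw [← h.inner_pow_apply_comm, norm_inner_symm, h.rankOneGap.norm_sq_pow_apply,
      add_sub_cancel_left]
  have hsq : Summable fun n => ‖(T ^ n) (D q)‖ ^ 2 := by
    refine summable_of_sum_range_le (c := hs 0) (fun _ => sq_nonneg _) fun n => ?_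
    simp_rw [hstep]
    rw [Finset.sum_range_sub' hs]
    exact sub_le_self _ (hs_nonneg n)
  rw [tendsto_zero_iff_norm_tendsto_zero]
  simpa using hsq.tendsto_atTop_zero.sqrt

theorem apply_mem_unobservable {y : E} (hy : y ∈ unobservable T q) : D y ∈ unobservable T q := by
  refine h.apply_mem_unobservable_of_forall_inner fun k => norm_le_zero_iff.1 ?_
  have hbound : Tendsto (fun n => ‖(T ^ (n + k)) (D q)‖ * ‖y‖) atTop (𝓝 0) := by
    simpa using (((h.tendsto_pow_apply_apply_gap e hsum).comp
      (tendsto_add_atTop_nat k)).norm).mul_const ‖y‖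
  refine ge_of_tendsto' hbound fun n => ?_
  rw [← h.rankOneGap.inner_pow_apply_pow_apply hy n, ← mul_apply_eq_comp, ← pow_add]
  exact (norm_inner_le_norm _ _).trans (by gcongr; exact h.rankOneGap.norm_pow_apply_le n y)

theorem tendsto_pow_apply (hinj : ∀ x, D x = 0 → x = 0) (hbot : unobservable T q = ⊥) (y : E) :
    Tendsto (fun n => (T ^ n) y) atTop (𝓝 0) := by
  let K : Submodule ℂ E := Submodule.span ℂ (Set.range fun k => (T ^ k) (D q))
  have hdense : Dense (K : Set E) := by
    rw [Submodule.dense_iff_topologicalClosure_eq_top, Submodule.topologicalClosure_eq_top_iff,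
      Submodule.eq_bot_iff]
    refine fun z hz => hinj z ((Submodule.mem_bot ℂ).1 (hbot ▸
      h.apply_mem_unobservable_of_forall_inner fun k => ?_))
    exact (Submodule.mem_orthogonal _ _).1 hz _ (Submodule.subset_span ⟨k, rfl⟩)
  refine closure_minimal (fun s hs => ?_) h.rankOneGap.isClosed_setOf_tendsto_pow_apply (hdense y)
  change Tendsto (fun n => (T ^ n) s) atTop (𝓝 0)
  induction hs using Submodule.span_induction with
  | mem x hx =>
    obtain ⟨k, rfl⟩ := hx
    refine ((h.tendsto_pow_apply_apply_gap e hsum).comp (tendsto_add_atTop_nat k)).congr fun n => ?_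
    rw [Function.comp, pow_add, mul_apply_eq_comp]
  | zero => simp only [map_zero, tendsto_const_nhds]
  | add x y _ _ hx hy => simpa only [map_add, add_zero] using hx.add hy
  | smul a x _ hx => simpa only [map_smul, smul_zero] using hx.const_smul a

end Compact

theorem unobservable_eq_bot {ι : Type*} {e : HilbertBasis ι ℂ E} {ζ : ι → ℝ}
    (hD : IsDiagonalAlong D ζ e) (hζ : Function.Injective ζ) (hζ0 : ∀ j, ζ j ≠ 0)
    (hsum : Summable fun j => ζ j ^ 2) (hq : ∀ j, ⟪q, e j⟫_ℂ ≠ 0) : unobservable T q = ⊥ := by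
  have hinv : ∀ x ∈ unobservable T q, D x ∈ unobservable T q := fun x =>
    h.apply_mem_unobservable e (hD.hasSum_norm_sq_basis e hsum).summable
  have := (isClosed_unobservable T q).completeSpace_coe
  have hproj : ∀ j, (unobservable T q).starProjection (e j) = 0 := fun j => by
    have hspan := hD.inner_smul_eq_of_apply_eq hζ (hζ0 j)
      (apply_starProjection_of_apply_eq_smul h.isSymmetric hinv (hD.apply_vec j))
    have hinner := mem_unobservable.1 ((unobservable T q).starProjection_apply_mem (e j)) 0
    rw [pow_zero, one_apply_eq_self, ← hspan, inner_smul_right] at hinner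
    rw [← hspan, (mul_eq_zero.1 hinner).resolve_right (hq j), zero_smul]
  have hzero : (unobservable T q).starProjection = 0 :=
    ContinuousLinearMap.ext_on (Submodule.dense_iff_topologicalClosure_eq_top.2 e.dense_span)
      (by rintro _ ⟨j, rfl⟩; exact hproj j)
  refine (Submodule.eq_bot_iff _).2 fun y hy => ?_
  rw [← Submodule.starProjection_eq_self_iff.2 hy, hzero]
  rfl

theorem conj_inner_pow_apply (n : ℕ) :
    conj ⟪q, (T ^ n) (D q)⟫_ℂ = ⟪q, (T ^ n) (D q)⟫_ℂ := by
  rw [inner_conj_symm, h.inner_pow_apply_comm]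

theorem isHankelOp {W : E →ₗᵢ[ℂ] L2} (hW : ∀ y n, ⟪l2Basis n, W y⟫_ℂ = ⟪q, (T ^ n) y⟫_ℂ) :
    IsHankelOp (fun n => ⟪q, (T ^ n) (D q)⟫_ℂ)
      (W.toContinuousLinearMap ∘L D ∘L ContinuousLinearMap.adjoint W.toContinuousLinearMap) := by
  refine IsHankelOp.of_inner_l2Basis_apply fun n p => ?_
  change ⟪l2Basis n, W (D (ContinuousLinearMap.adjoint W.toContinuousLinearMap (l2Basis p)))⟫_ℂ = _
  rw [hW, ← h.inner_pow_apply_comm, ContinuousLinearMap.adjoint_inner_right, ← inner_conj_symm]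
  change conj ⟪l2Basis p, W ((T ^ n) (D q))⟫_ℂ = _
  rw [hW, ← mul_apply_eq_comp, ← pow_add, h.conj_inner_pow_apply, add_comm]

end BackwardShiftModel

end BackwardShift
section GapDefect

variable {E : Type*} [NormedAddCommGroup E] [InnerProductSpace ℂ E] [CompleteSpace E]

theorem eq_zero_of_isPositive_of_hasSum_zero {ι : Type*} {T : E →L[ℂ] E} (hT : T.IsPositive)
    (e : HilbertBasis ι ℂ E) (hsum : HasSum (fun j => T.reApplyInnerSelf (e j)) 0) : T = 0 := by
  obtain ⟨S, rfl⟩ := CStarAlgebra.nonneg_iff_eq_star_mul_self.1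
    ((ContinuousLinearMap.nonneg_iff_isPositive T).2 hT)
  have hnorm : ∀ x, (star S * S).reApplyInnerSelf x = ‖S x‖ ^ 2 := fun x =>
    (S.apply_norm_sq_eq_inner_adjoint_left x).symm
  simp only [hnorm] at hsum
  have hzero := (hasSum_zero_iff_of_nonneg fun j => sq_nonneg ‖S (e j)‖).1 hsum
  have hS : S = 0 :=
    ContinuousLinearMap.ext_on (Submodule.dense_iff_topologicalClosure_eq_top.2 e.dense_span) <| by
      rintro _ ⟨j, rfl⟩
      simpa using congrFun hzero j
  rw [hS, mul_zero]

/-- The operator `A* A - B* B - ⟪g, ·⟫ g`, which vanishes exactly when `RankOneGap A B g` holds. -/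
def gapDefect (A B : E →L[ℂ] E) (g : E) : E →L[ℂ] E :=
  ContinuousLinearMap.adjoint A ∘L A - ContinuousLinearMap.adjoint B ∘L B -
    InnerProductSpace.rankOne ℂ g g

variable {A B : E →L[ℂ] E} {g : E} {ι κ : Type*} {ζ : ι → ℝ} {γ : κ → ℝ} {u : ι → E} {v : κ → E}

theorem inner_gapDefect_apply (A B : E →L[ℂ] E) (g x y : E) :
    ⟪x, gapDefect A B g y⟫_ℂ = ⟪A x, A y⟫_ℂ - ⟪B x, B y⟫_ℂ - ⟪x, g⟫_ℂ * ⟪g, y⟫_ℂ := by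
  change ⟪x, ContinuousLinearMap.adjoint A (A y) - ContinuousLinearMap.adjoint B (B y) -
    ⟪g, y⟫_ℂ • g⟫_ℂ = _
  rw [inner_sub_right, inner_sub_right, ContinuousLinearMap.adjoint_inner_right,
    ContinuousLinearMap.adjoint_inner_right, inner_smul_right, mul_comm ⟪g, y⟫_ℂ]

theorem isSymmetric_gapDefect (A B : E →L[ℂ] E) (g : E) : (gapDefect A B g).IsSymmetric :=
  fun x y => by
    change ⟪gapDefect A B g x, y⟫_ℂ = ⟪x, gapDefect A B g y⟫_ℂ
    rw [← inner_conj_symm, inner_gapDefect_apply, inner_gapDefect_apply]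
    simp only [map_sub, map_mul, inner_conj_symm]
    ring

theorem reApplyInnerSelf_gapDefect (A B : E →L[ℂ] E) (g x : E) :
    (gapDefect A B g).reApplyInnerSelf x = ‖A x‖ ^ 2 - ‖B x‖ ^ 2 - ‖⟪g, x⟫_ℂ‖ ^ 2 := by
  rw [ContinuousLinearMap.reApplyInnerSelf_apply, ← inner_conj_symm, RCLike.conj_re,
    inner_gapDefect_apply, ← inner_conj_symm x g, RCLike.conj_mul, inner_self_eq_norm_sq_to_K,
    inner_self_eq_norm_sq_to_K]
  norm_cast

theorem rankOneGap_of_gapDefect_eq_zero (h : gapDefect A B g = 0) : RankOneGap A B g :=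
  fun x y => by
    have hxy := inner_gapDefect_apply A B g x y
    rw [h, zero_apply, inner_zero_right] at hxy
    linear_combination -hxy

-- Modulo the kernel of the defect, every vector is orthogonal to the `v m`, hence killed by `B`.
theorem isPositive_gapDefect (hB : IsDiagonalAlong B γ v) (hv : ∀ m, gapDefect A B g (v m) = 0)
    (hle : ∀ x, ‖⟪g, x⟫_ℂ‖ ≤ ‖A x‖) : (gapDefect A B g).IsPositive := by
  have hsymm := isSymmetric_gapDefect A B g
  refine ContinuousLinearMap.isPositive_def.2 ⟨hsymm, fun x => ?_⟩
  obtain ⟨p, hp⟩ := summable_smul_of_summable_norm_sq hB.orthonormal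
    (hB.orthonormal.inner_products_summable (x := x))
  have hRp : gapDefect A B g p = 0 := by
    refine (hp.mapL (gapDefect A B g)).unique (hasSum_zero.congr_fun fun m => ?_)
    rw [map_smul, hv, smul_zero]
  have hBr : B (x - p) = 0 := hB.apply_eq_zero fun m => by
    rw [inner_sub_right, inner_eq_of_hasSum_smul hB.orthonormal hp, sub_self]
  have hxr : (gapDefect A B g).reApplyInnerSelf x =
      (gapDefect A B g).reApplyInnerSelf (x - p) := by
    have hinner : ⟪gapDefect A B g x, p⟫_ℂ = ⟪x, gapDefect A B g p⟫_ℂ := hsymm x p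
    rw [ContinuousLinearMap.reApplyInnerSelf_apply, ContinuousLinearMap.reApplyInnerSelf_apply,
      map_sub, hRp, sub_zero, inner_sub_right, hinner, hRp, inner_zero_right, sub_zero]
  rw [hxr, reApplyInnerSelf_gapDefect, hBr, norm_zero, zero_pow two_ne_zero, sub_zero, sub_nonneg]
  exact pow_le_pow_left₀ (norm_nonneg _) (hle _) 2

-- The eigenvector equations make the defect positive, and the trace hypothesis makes it trace free.
theorem rankOneGap_of_norm_sq_eq (hA : IsDiagonalAlong A ζ u) (hB : IsDiagonalAlong B γ v)
    (hζ : Summable fun j => ζ j ^ 2) (hγ : Summable fun m => γ m ^ 2)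
    (hle : ∀ x, ‖⟪g, x⟫_ℂ‖ ≤ ‖A x‖)
    (hv : ∀ m, A (A (v m)) = ((γ m ^ 2 : ℝ) : ℂ) • v m + ⟪g, v m⟫_ℂ • g)
    (htrace : ‖g‖ ^ 2 = ∑' j, ζ j ^ 2 - ∑' m, γ m ^ 2) : RankOneGap A B g := by
  have hdefect : ∀ m, gapDefect A B g (v m) = 0 := fun m => ext_inner_left ℂ fun x => by
    have hAA : ⟪A x, A (v m)⟫_ℂ = ⟪x, A (A (v m))⟫_ℂ := hA.isSymmetric _ _
    have hBB : ⟪B x, B (v m)⟫_ℂ = ⟪x, B (B (v m))⟫_ℂ := hB.isSymmetric _ _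
    rw [inner_gapDefect_apply, hAA, hBB, hv, hB.apply_vec, map_smul, hB.apply_vec, smul_smul,
      inner_add_right, inner_smul_right, inner_smul_right, inner_smul_right, inner_zero_right]
    push_cast
    ring
  obtain ⟨s, e, -⟩ := exists_hilbertBasis ℂ E
  have hsum := ((hA.hasSum_norm_sq_basis e hζ).sub (hB.hasSum_norm_sq_basis e hγ)).sub
    (hasSum_norm_inner_sq e g)
  rw [htrace, sub_self] at hsum
  refine rankOneGap_of_gapDefect_eq_zero
    (eq_zero_of_isPositive_of_hasSum_zero (isPositive_gapDefect hB hdefect hle) e ?_)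
  exact hsum.congr_fun fun j => by rw [reApplyInnerSelf_gapDefect, norm_inner_symm]

end GapDefect

section Existence

variable {E : Type*} [NormedAddCommGroup E] [InnerProductSpace ℂ E] {A : E →L[ℂ] E} {g : E}

section Eigenvectors

variable {ι : Type*} {μ : ι → ℝ} {w : ι → E} (hA : A.IsSymmetric) (hμ : Function.Injective μ)
  (hw : ∀ m, A (A (w m)) = (μ m : ℂ) • w m + g) (hgw : ∀ m, ⟪g, w m⟫_ℂ = 1)
include hA hμ hw hgw

theorem inner_eq_zero_of_apply_apply_eq {m n : ι} (hmn : m ≠ n) : ⟪w m, w n⟫_ℂ = 0 := by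
  have hsymm : ⟪A (A (w m)), w n⟫_ℂ = ⟪w m, A (A (w n))⟫_ℂ := (hA _ _).trans (hA _ _)
  rw [hw, hw, inner_add_left, inner_add_right, inner_smul_left, inner_smul_right, hgw,
    ← inner_conj_symm (w m) g, hgw, map_one, Complex.conj_ofReal] at hsymm
  have hprod : ((μ m : ℂ) - μ n) * ⟪w m, w n⟫_ℂ = 0 := by linear_combination hsymm
  exact (mul_eq_zero.1 hprod).resolve_left
    (sub_ne_zero.2 fun e => hmn (hμ (Complex.ofReal_injective e)))

theorem exists_orthonormal_apply_apply_eq : ∃ v : ι → E, Orthonormal ℂ v ∧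
    ∀ m, A (A (v m)) = (μ m : ℂ) • v m + ⟪g, v m⟫_ℂ • g := by
  have hw0 : ∀ m, w m ≠ 0 := fun m h0 => by simpa [h0] using hgw m
  refine ⟨fun m => (‖w m‖ : ℂ)⁻¹ • w m, ⟨fun m => norm_smul_inv_norm (hw0 m), fun m n hmn => ?_⟩,
    fun m => ?_⟩
  · dsimp only
    rw [inner_smul_left, inner_smul_right, inner_eq_zero_of_apply_apply_eq hA hμ hw hgw hmn,
      mul_zero, mul_zero]
  · rw [map_smul, map_smul, hw, inner_smul_right, hgw, mul_one, smul_add, smul_comm]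

end Eigenvectors

variable [CompleteSpace E]

theorem exists_inner_eq {ι : Type*} {u : ι → E} (hu : Orthonormal ℂ u) {a : ι → ℝ}
    (ha : Summable fun j => a j ^ 2) : ∃ x, ∀ j, ⟪u j, x⟫_ℂ = a j := by
  obtain ⟨x, hx⟩ := summable_smul_of_summable_norm_sq (a := fun j => (a j : ℂ)) hu (by simpa)
  exact ⟨x, inner_eq_of_hasSum_smul hu hx⟩

theorem RankOneGap.exists_comp_eq {B : E →L[ℂ] E} {q : E} (h : RankOneGap A B (A q))
    (hA : A.IsSymmetric) (hinj : ∀ x, A x = 0 → x = 0) :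
    ∃ T : E →L[ℂ] E, T ∘L A = B ∧ RankOneGap 1 T q := by
  have hdense := denseRange_of_isSymmetric hA hinj
  let T : E →L[ℂ] E := B.toLinearMap.extendOfNorm A.toLinearMap
  have hT : ∀ x, T (A x) = B x := LinearMap.extendOfNorm_eq (f := B.toLinearMap)
    (e := A.toLinearMap) hdense ⟨1, fun x => (h.norm_apply_le x).trans_eq (one_mul _).symm⟩
  refine ⟨T, ContinuousLinearMap.ext hT, fun x y => ?_⟩
  rw [one_apply_eq_self, one_apply_eq_self]
  refine hdense.induction_on₂
    (p := fun x y => ⟪x, y⟫_ℂ = ⟪T x, T y⟫_ℂ + ⟪x, q⟫_ℂ * ⟪q, y⟫_ℂ)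
    (isClosed_eq (by fun_prop) (by fun_prop)) (fun x y => ?_) x y
  rw [hT, hT, h x y]
  rw [show ⟪x, A q⟫_ℂ = ⟪A x, q⟫_ℂ from (hA x q).symm, show ⟪A q, y⟫_ℂ = ⟪q, A y⟫_ℂ from hA q y]

theorem exists_isDiagonalAlong_of_antitone_sq {ζ : ℕ → ℝ} (hζ : Antitone (ζ ^ 2)) {u : ℕ → E}
    (hu : Orthonormal ℂ u) : ∃ T : E →L[ℂ] E, IsDiagonalAlong T ζ u :=
  exists_isDiagonalAlong hu (abs_nonneg (ζ 0)) fun j => sq_le_sq.1 (hζ j.zero_le)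

namespace Interlacing

variable {ζ γ : ℕ → ℝ} (h : Interlacing (ζ ^ 2) (γ ^ 2))
include h

theorem sq_sqrt_weight (j : ℕ) : √(weight (ζ ^ 2) (γ ^ 2) j) ^ 2 = weight (ζ ^ 2) (γ ^ 2) j :=
  Real.sq_sqrt (h.weight_pos j).le

variable {e : HilbertBasis ℕ ℂ E} {D : E →L[ℂ] E}

theorem exists_norm_le_one_inner_apply_eq (hD : IsDiagonalAlong D ζ e) :
    ∃ q, ‖q‖ ≤ 1 ∧ ∀ j, ⟪e j, D q⟫_ℂ = √(weight (ζ ^ 2) (γ ^ 2) j) := by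
  have hsq : ∀ j, (√(weight (ζ ^ 2) (γ ^ 2) j) / ζ j) ^ 2 =
      weight (ζ ^ 2) (γ ^ 2) j / (ζ ^ 2) j := fun j => by
    rw [div_pow, h.sq_sqrt_weight, Pi.pow_apply]
  obtain ⟨q, hq⟩ := exists_inner_eq (a := fun j => √(weight (ζ ^ 2) (γ ^ 2) j) / ζ j)
    e.orthonormal (by simpa only [hsq] using h.summable_weight_div_pole)
  refine ⟨q, ?_, fun j => ?_⟩
  · have hnorm := hasSum_norm_inner_sq e q
    simp only [hq, Complex.norm_real, Real.norm_eq_abs, sq_abs, hsq] at hnorm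
    rw [← sq_le_one_iff₀ (norm_nonneg q), ← hnorm.tsum_eq]
    exact h.tsum_weight_div_pole_le_one
  · rw [hD.inner_apply, hq, Complex.ofReal_div, mul_div_cancel₀ _
      (Complex.ofReal_ne_zero.2 (h.left_ne_zero j))]

variable {g : E} (hg : ∀ j, ⟪e j, g⟫_ℂ = √(weight (ζ ^ 2) (γ ^ 2) j))
include hg

omit [CompleteSpace E] in
theorem norm_sq_eq_tsum_sub_tsum : ‖g‖ ^ 2 = ∑' j, ζ j ^ 2 - ∑' m, γ m ^ 2 := by
  have hnorm := hasSum_norm_inner_sq e g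
  simp only [hg, Complex.norm_real, Real.norm_eq_abs, sq_abs, h.sq_sqrt_weight] at hnorm
  exact (hnorm.unique h.hasSum_weight).trans (h.summable_pole.tsum_sub h.summable_root)

-- `w` solves `(D² - γ m²) w = g`, so its coordinates are `√(weight j) / (ζ j² - γ m²)`.
theorem exists_apply_apply_eq (hD : IsDiagonalAlong D ζ e) (m : ℕ) :
    ∃ w, D (D w) = ((γ m ^ 2 : ℝ) : ℂ) • w + g ∧ ⟪g, w⟫_ℂ = 1 := by
  have hne : ∀ j, ζ j ^ 2 - γ m ^ 2 ≠ 0 := fun j => sub_ne_zero.2 (h.pole_ne_root j m)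
  have hsummable : Summable fun j =>
      (√(weight (ζ ^ 2) (γ ^ 2) j) / (ζ j ^ 2 - γ m ^ 2)) ^ 2 := by
    obtain ⟨δ, hδ, hgap⟩ := h.exists_pos_le_abs_pole_sub_root m
    refine (h.hasSum_weight.summable.div_const (δ ^ 2)).of_nonneg_of_le (fun _ => sq_nonneg _)
      fun j => ?_
    rw [div_pow, h.sq_sqrt_weight]
    have hle : δ ^ 2 ≤ (ζ j ^ 2 - γ m ^ 2) ^ 2 :=
      sq_le_sq.2 ((abs_of_pos hδ).trans_le (hgap j))
    exact div_le_div_of_nonneg_left (h.weight_pos j).le (by positivity) hle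
  obtain ⟨w, hw⟩ := exists_inner_eq e.orthonormal hsummable
  refine ⟨w, eq_of_forall_inner_eq e fun j => ?_, ?_⟩
  · rw [hD.inner_apply, hD.inner_apply, inner_add_right, inner_smul_right, hw, hg]
    have hne_complex : (ζ j : ℂ) ^ 2 - (γ m : ℂ) ^ 2 ≠ 0 := by exact_mod_cast hne j
    push_cast
    field_simp
    ring
  · refine (e.hasSum_inner_mul_inner g w).unique (HasSum.congr_fun
      (Complex.hasSum_ofReal.2 (h.hasSum_weight_div_sub_root m)) fun j => ?_) |>.trans
        Complex.ofReal_one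
    rw [← inner_conj_symm, hg, hw, Complex.conj_ofReal, ← Complex.ofReal_mul, mul_div_assoc',
      ← sq, h.sq_sqrt_weight]
    rfl

omit hg in
theorem exists_backwardShiftModel (e : HilbertBasis ℕ ℂ E) :
    ∃ (D T : E →L[ℂ] E) (q : E) (v : ℕ → E), BackwardShiftModel D T q ∧
      IsDiagonalAlong D ζ e ∧ IsDiagonalAlong (T ∘L D) γ v ∧ ∀ j, ⟪q, e j⟫_ℂ ≠ 0 := by
  obtain ⟨D, hD⟩ :=
    exists_isDiagonalAlong_of_antitone_sq h.strictAnti_pole.antitone e.orthonormal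
  obtain ⟨q, hq, hg⟩ := h.exists_norm_le_one_inner_apply_eq hD
  choose w hw hgw using h.exists_apply_apply_eq hg hD
  obtain ⟨v, hv, hDv⟩ := exists_orthonormal_apply_apply_eq hD.isSymmetric
    h.strictAnti_root.injective hw hgw
  obtain ⟨B, hB⟩ := exists_isDiagonalAlong_of_antitone_sq h.strictAnti_root.antitone hv
  have hle : ∀ x, ‖⟪D q, x⟫_ℂ‖ ≤ ‖D x‖ := fun x => by
    rw [show ⟪D q, x⟫_ℂ = ⟪q, D x⟫_ℂ from hD.isSymmetric q x]
    exact (norm_inner_le_norm _ _).trans (mul_le_of_le_one_left (norm_nonneg _) hq)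
  obtain ⟨T, rfl, hT⟩ := (rankOneGap_of_norm_sq_eq hD hB h.summable_pole h.summable_root hle hDv
    (h.norm_sq_eq_tsum_sub_tsum hg)).exists_comp_eq hD.isSymmetric
      fun x => hD.eq_zero_of_apply_eq_zero h.left_ne_zero
  refine ⟨D, T, q, v, ⟨hD.isSymmetric, hB.isSymmetric, hT⟩, hD, hB, fun j hj => ?_⟩
  have hgj := hg j
  rw [hD.inner_apply, ← inner_conj_symm, hj, map_zero, mul_zero, eq_comm,
    Complex.ofReal_eq_zero] at hgj
  exact (Real.sqrt_pos.2 (h.weight_pos j)).ne' hgj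

omit hg in
theorem exists_isHankelOp_hasSimpleSpectrum :
    ∃ c : ℕ → ℝ, InH12 (fun n => (c n : ℂ)) ∧ ∃ Γ Γt : L2 →L[ℂ] L2,
      IsHankelOp (fun n => (c n : ℂ)) Γ ∧ IsHankelOp (shiftSeq fun n => (c n : ℂ)) Γt ∧
      HasSimpleSpectrum Γ ζ ∧ HasSimpleSpectrum Γt γ := by
  obtain ⟨D, T, q, v, hM, hD, hB, hq⟩ := h.exists_backwardShiftModel l2Basis
  have hbot := hM.unobservable_eq_bot hD h.left_injective h.left_ne_zero h.summable_pole hq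
  obtain ⟨W, hW⟩ := hM.rankOneGap.exists_linearIsometry
    (hM.tendsto_pow_apply l2Basis (hD.hasSum_norm_sq_basis l2Basis h.summable_pole).summable
      (fun x => hD.eq_zero_of_apply_eq_zero h.left_ne_zero) hbot)
  have hreal : (fun n => (RCLike.re ⟪q, (T ^ n) (D q)⟫_ℂ : ℂ)) = fun n => ⟪q, (T ^ n) (D q)⟫_ℂ :=
    funext fun n => Complex.conj_eq_iff_re.1 (hM.conj_inner_pow_apply n)
  have hshift : (shiftSeq fun n => ⟪q, (T ^ n) (D q)⟫_ℂ) = fun n => ⟪q, (T ^ n) ((T ∘L D) q)⟫_ℂ :=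
    funext fun n => by rw [shiftSeq, pow_succ, mul_apply_eq_comp]; rfl
  have hΓ := hM.isHankelOp hW
  have hdiag := hD.conj_isometry W
  refine ⟨fun n => RCLike.re ⟪q, (T ^ n) (D q)⟫_ℂ, ?_⟩
  rw [hreal, hshift]
  exact ⟨hΓ.inH12_iff.2 (hdiag.hasSum_norm_sq_basis l2Basis h.summable_pole).summable, _, _, hΓ,
    hM.comp.isHankelOp hW, hdiag.hasSimpleSpectrum h.left_injective h.left_ne_zero,
    (hB.conj_isometry W).hasSimpleSpectrum h.right_injective h.right_ne_zero⟩

end Interlacing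

end Existence
/-- Given sequences `(ζ_j)_{j≥1}`, `(γ_m)_{m≥1}` of reals (indexed here from `0`) with
`|ζ_1| > |γ_1| > |ζ_2| > |γ_2| > … > 0` and `Σ ζ_j² < ∞`, there is a unique real sequence
`c ∈ h^{1/2}` such that the nonzero eigenvalues of the self-adjoint operator `Γ_c` are
exactly the `ζ_j`, all simple, and the nonzero eigenvalues of `Γ̃_c` are exactly the
`γ_m`, all simple. -/
theorem statement1 (ζ γ : ℕ → ℝ)
    (h1 : ∀ j : ℕ, |γ j| < |ζ j|)
    (h2 : ∀ j : ℕ, |ζ (j + 1)| < |γ j|)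
    (h3 : ∀ j : ℕ, 0 < |γ j|)
    (hsum : Summable fun j : ℕ => ζ j ^ 2) :
    ∃! c : ℕ → ℝ,
      InH12 (fun n => (c n : ℂ)) ∧
      ∃ Γ Γt : L2 →L[ℂ] L2,
        IsHankelOp (fun n => (c n : ℂ)) Γ ∧
        IsHankelOp (shiftSeq fun n => (c n : ℂ)) Γt ∧
        {z : ℂ | z ≠ 0 ∧ Module.End.HasEigenvalue Γ.toLinearMap z}
          = Set.range (fun j : ℕ => (ζ j : ℂ)) ∧
        (∀ j : ℕ, Module.finrank ℂ
          (Module.End.eigenspace Γ.toLinearMap (ζ j : ℂ)) = 1) ∧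
        {z : ℂ | z ≠ 0 ∧ Module.End.HasEigenvalue Γt.toLinearMap z}
          = Set.range (fun j : ℕ => (γ j : ℂ)) ∧
        (∀ j : ℕ, Module.finrank ℂ
          (Module.End.eigenspace Γt.toLinearMap (γ j : ℂ)) = 1) := by
  have hζγ : Interlacing (ζ ^ 2) (γ ^ 2) :=
    { root_lt_pole := fun j => sq_lt_sq.2 (h1 j)
      pole_succ_lt_root := fun j => sq_lt_sq.2 (h2 j)
      root_pos := fun j => sq_pos_of_ne_zero (abs_pos.1 (h3 j))
      summable_pole := hsum }
  obtain ⟨c, hc, Γ, Γt, hΓ, hΓt, hspec, hspect⟩ := hζγ.exists_isHankelOp_hasSimpleSpectrum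
  refine ⟨c, ⟨hc, Γ, Γt, hΓ, hΓt, hspec.eigenvalues_eq, hspec.finrank_eigenspace,
    hspect.eigenvalues_eq, hspect.finrank_eigenspace⟩, ?_⟩
  rintro d ⟨hd, Δ, Δt, hΔ, hΔt, heig, hrank, heigt, hrankt⟩
  refine funext fun n => Complex.ofReal_injective ?_
  exact (hΔ.eq_tsum_chainCoeff hΔt (fun k => Complex.conj_ofReal (d k)) hd
    ⟨heig, hrank⟩ ⟨heigt, hrankt⟩ hζγ n).trans
      (hΓ.eq_tsum_chainCoeff hΓt (fun k => Complex.conj_ofReal (c k)) hc hspec hspect hζγ n).symm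

end
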